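/- Let g be the simple complex Lie algebra of type E₈. Then there exists an sl₂-triple (e,h,f) in g such that the centralizer g_e has dimension 84, its derived subalgebra [g_e, g_e] has dimension 83, and e ∉ [g_e, g_e]; consequently g_e is the direct sum of the span of e and [g_e, g_e]. -/

import Mathlib

namespace PaperStmt

open LieAlgebra Module

variable (R : Type*) {L : Type*} [CommRing R] [LieRing L] [LieAlgebra R L]

/-- The centralizer `g_x = {y ∈ g | ⁅y, x⁆ = 0}` of an element of a Lie algebra,
as a Lie subalgebra. -/
def centralizerOf (x : L) : LieSubalgebra R L where
  carrier := {y : L | ⁅y, x⁆ = 0}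
  add_mem' := fun {a b} (ha : ⁅a, x⁆ = 0) (hb : ⁅b, x⁆ = 0) => by
    show ⁅a + b, x⁆ = 0
    rw [add_lie, ha, hb, add_zero]
  zero_mem' := zero_lie x
  smul_mem' := fun c a (ha : ⁅a, x⁆ = 0) => by
    show ⁅c • a, x⁆ = 0
    rw [smul_lie, ha, smul_zero]
  lie_mem' := fun {a b} (ha : ⁅a, x⁆ = 0) (hb : ⁅b, x⁆ = 0) => by
    show ⁅⁅a, b⁆, x⁆ = 0
    rw [lie_lie, ha, hb, lie_zero, lie_zero, sub_zero]

/-- The subspace spanned by the brackets `⁅x, y⁆` with `x ∈ A`, `y ∈ B`. -/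
def bracketSpan (A B : Submodule R L) : Submodule R L :=
  Submodule.span R {z : L | ∃ x ∈ A, ∃ y ∈ B, z = ⁅x, y⁆}

/-- The derived subalgebra `[k, k]` of a Lie subalgebra `k`, as a subspace of the
ambient Lie algebra: the span of all brackets `⁅a, b⁆` with `a, b ∈ k`. -/
def derivedOf (K : LieSubalgebra R L) : Submodule R L :=
  bracketSpan R K.toSubmodule K.toSubmodule

/-- An element `e` of a Lie algebra is reachable if `e ∈ [g_e, g_e]`. -/
def IsReachable (e : L) : Prop :=
  e ∈ derivedOf R (centralizerOf R e)

/-- `g(k)`, the `k`-eigenspace of `ad h`. -/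
def gradePiece (h : L) (k : ℤ) : Submodule R L :=
  Module.End.eigenspace (LieAlgebra.ad R L h) (k : R)

/-- `g(k)_e = g(k) ∩ g_e`. -/
def gradePieceCent (e h : L) (k : ℤ) : Submodule R L :=
  gradePiece R h k ⊓ (centralizerOf R e).toSubmodule

/-- `g(≥1)_e`, the sum of the subspaces `g(k)_e` over all `k ≥ 1`. -/
def gradeGeOneCent (e h : L) : Submodule R L :=
  ⨆ k ∈ {k : ℤ | 1 ≤ k}, gradePieceCent R e h k

end PaperStmt

/-!
Every root of a simply-laced root system is reached from the simple ones by adding simple roots, and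
signs alternating along the Dynkin diagram turn this into a Chevalley basis of the Lie algebra
defined by the Serre relations. The only point at which the presentation could collapse is excluded
by a representation, the adjoint module in Lusztig's canonical basis. Hence the dimension of every
simultaneous eigenspace of elements of the Cartan subalgebra of `E₈` is obtained by counting roots.

The nilpotent element `e = e₁ + e₂` is regular in a Levi subalgebra of type `A₃ + A₁`. The
dimension 84 of `g_e` is the number of irreducible constituents of the adjoint representation of
its `sl₂`-triple `(e, h, f)`. Let `f₁` be the negative element of the `sl₂`-triple of the component
`A₃`. Counting weights shows that elements of `g_e` of `h`-weight 0 or 1 commute with `f₁`, so that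
`f₁` is orthogonal to `[g_e, g_e]` with respect to the Killing form, whereas it is not orthogonal
to `e`. In the other direction, let `t` be an element of the Cartan subalgebra with the Levi
subalgebra as its centralizer. Every `t`-weight vector in `g_e` of nonzero weight lies in
`[t, g_e]`, and the highest weight vectors inside the Levi subalgebra, of weights 0, 2, 4 and 6,
are explicit brackets up to multiples of `e`.
-/

namespace SimplyLaced

open Matrix

section Roots

variable {ι : Type*}

/-- A simply-laced Cartan matrix of finite type: positive definite, with diagonal entries `2`
and off-diagonal entries `0` or `-1`. -/
structure IsFiniteType (A : Matrix ι ι ℤ) : Prop where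
  posDef : A.PosDef
  diag : ∀ i, A i i = 2
  isSimplyLaced : A.IsSimplyLaced

variable {A : Matrix ι ι ℤ}

lemma IsFiniteType.apply_comm (hA : IsFiniteType A) (i j : ι) : A i j = A j i := by
  simpa only [star_trivial] using hA.posDef.isHermitian.apply j i

variable [Fintype ι]

/-- The roots of a simply-laced Cartan matrix, in coordinates with respect to the simple roots:
the vectors of norm `2` of the root lattice. -/
def IsRoot (A : Matrix ι ι ℤ) (α : ι → ℤ) : Prop := α ⬝ᵥ A *ᵥ α = 2

/-- The positive roots: those with nonnegative coordinates. -/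
def IsPosRoot (A : Matrix ι ι ℤ) (α : ι → ℤ) : Prop := IsRoot A α ∧ 0 ≤ α

instance (A : Matrix ι ι ℤ) : DecidablePred (IsRoot A) := fun α =>
  inferInstanceAs (Decidable (α ⬝ᵥ A *ᵥ α = 2))

instance (A : Matrix ι ι ℤ) : DecidablePred (IsPosRoot A) := fun α =>
  inferInstanceAs (Decidable (IsRoot A α ∧ ∀ i, 0 ≤ α i))

/-- The height of an element of the root lattice. -/
def height (α : ι → ℤ) : ℤ := ∑ i, α i

variable {α β : ι → ℤ} {i j : ι}

lemma height_neg (α : ι → ℤ) : height (-α) = -height α := Finset.sum_neg_distrib _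

lemma IsRoot.neg (h : IsRoot A α) : IsRoot A (-α) := by
  simpa only [IsRoot, mulVec_neg, neg_dotProduct, dotProduct_neg, neg_neg] using h

lemma not_isRoot_zero (A : Matrix ι ι ℤ) : ¬ IsRoot A 0 := by
  simp only [IsRoot, mulVec_zero, dotProduct_zero, OfNat.zero_ne_ofNat, not_false_eq_true]

lemma IsRoot.ne_zero (h : IsRoot A α) : α ≠ 0 :=
  fun h0 => not_isRoot_zero A (h0 ▸ h)

lemma IsPosRoot.height_pos (h : IsPosRoot A α) : 0 < height α := by
  obtain ⟨i, hi⟩ := Function.ne_iff.1 h.1.ne_zero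
  exact Finset.sum_pos' (fun j _ => h.2 j) ⟨i, Finset.mem_univ i, (h.2 i).lt_of_ne' hi⟩

lemma IsPosRoot.not_isPosRoot_neg (h : IsPosRoot A α) : ¬ IsPosRoot A (-α) := fun h' =>
  h.1.ne_zero (le_antisymm (neg_nonneg.1 h'.2) h.2)

namespace IsFiniteType

variable (hA : IsFiniteType A)
include hA

lemma dotProduct_mulVec_comm (α β : ι → ℤ) : α ⬝ᵥ A *ᵥ β = β ⬝ᵥ A *ᵥ α := by
  rw [dotProduct_mulVec, ← mulVec_transpose, dotProduct_comm,
    show Aᵀ = A from Matrix.ext fun i j => hA.apply_comm j i]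

lemma eq_zero_of_norm_nonpos (h : α ⬝ᵥ A *ᵥ α ≤ 0) : α = 0 := by
  by_contra h0
  exact h.not_gt (by simpa only [star_trivial] using hA.posDef.dotProduct_mulVec_pos h0)

lemma norm_add (α β : ι → ℤ) :
    (α + β) ⬝ᵥ A *ᵥ (α + β) = α ⬝ᵥ A *ᵥ α + 2 * (α ⬝ᵥ A *ᵥ β) + β ⬝ᵥ A *ᵥ β := by
  rw [mulVec_add, add_dotProduct, dotProduct_add, dotProduct_add, hA.dotProduct_mulVec_comm β α]
  ring

lemma mulVec_nonpos_of_eq_zero (h : 0 ≤ α) (hi : α i = 0) : (A *ᵥ α) i ≤ 0 := by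
  refine Finset.sum_nonpos fun j _ => ?_
  rcases eq_or_ne i j with rfl | hij
  · rw [hi, mul_zero]
  · exact mul_nonpos_of_nonpos_of_nonneg (by grind [hA.isSimplyLaced hij]) (h j)

end IsFiniteType

variable [DecidableEq ι]

/-- The simple root `αᵢ`. -/
abbrev simpleRoot (i : ι) : ι → ℤ := Pi.single i 1

omit [Fintype ι] in
lemma simpleRoot_injective : Function.Injective (simpleRoot : ι → ι → ℤ) := fun i j h => by
  by_contra hij
  have := congr_fun h i
  rw [simpleRoot, Pi.single_eq_same, simpleRoot, Pi.single_eq_of_ne hij] at this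
  lia

lemma height_simpleRoot (i : ι) : height (simpleRoot i) = 1 :=
  (Finset.sum_pi_single' i 1 _).trans (if_pos (Finset.mem_univ i))

omit [Fintype ι] in
lemma simpleRoot_ne_neg_simpleRoot (i j : ι) : simpleRoot i ≠ -simpleRoot j := fun h => by
  have hj : (0 : ι → ℤ) ≤ simpleRoot j := Pi.single_nonneg.2 zero_le_one
  have hi := h ▸ neg_nonpos.2 hj
  exact absurd (Pi.single_nonpos.1 hi) (by decide)

lemma height_add_simpleRoot (α : ι → ℤ) (i : ι) : height (α + simpleRoot i) = height α + 1 := by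
  rw [← height_simpleRoot i]
  exact Finset.sum_add_distrib

lemma height_sub_simpleRoot (α : ι → ℤ) (i : ι) : height (α - simpleRoot i) = height α - 1 := by
  rw [← height_simpleRoot i]
  exact Finset.sum_sub_distrib ..

lemma mulVec_simpleRoot (A : Matrix ι ι ℤ) (i j : ι) : (A *ᵥ simpleRoot j) i = A i j := by
  simp only [simpleRoot, mulVec_single_one, col_apply]

lemma mulVec_add_simpleRoot (A : Matrix ι ι ℤ) (α : ι → ℤ) (i j : ι) :
    (A *ᵥ (α + simpleRoot j)) i = (A *ᵥ α) i + A i j := by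
  rw [mulVec_add, Pi.add_apply, mulVec_simpleRoot]

lemma mulVec_sub_simpleRoot (A : Matrix ι ι ℤ) (α : ι → ℤ) (i j : ι) :
    (A *ᵥ (α - simpleRoot j)) i = (A *ᵥ α) i - A i j := by
  rw [mulVec_sub, Pi.sub_apply, mulVec_simpleRoot]

namespace IsFiniteType

variable (hA : IsFiniteType A)
include hA

lemma isPosRoot_simpleRoot (i : ι) : IsPosRoot A (simpleRoot i) := by
  refine ⟨?_, Pi.single_nonneg.2 zero_le_one⟩
  rw [IsRoot, single_one_dotProduct, mulVec_simpleRoot, hA.diag]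

lemma norm_add_simpleRoot (α : ι → ℤ) (i : ι) :
    (α + simpleRoot i) ⬝ᵥ A *ᵥ (α + simpleRoot i) = α ⬝ᵥ A *ᵥ α + 2 * (A *ᵥ α) i + 2 := by
  rw [hA.norm_add, hA.dotProduct_mulVec_comm α (simpleRoot i), (hA.isPosRoot_simpleRoot i).1,
    single_one_dotProduct]

lemma isRoot_add_simpleRoot_iff (h : IsRoot A α) :
    IsRoot A (α + simpleRoot i) ↔ (A *ᵥ α) i = -1 := by
  rw [IsRoot, hA.norm_add_simpleRoot, h]
  lia

omit [DecidableEq ι] in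
lemma neg_two_le (h : IsRoot A α) (i : ι) : -2 ≤ (A *ᵥ α) i := by
  classical
  by_contra! hlt
  have hnorm := hA.norm_add_simpleRoot α i
  rw [h] at hnorm
  have hzero : α + simpleRoot i = 0 := hA.eq_zero_of_norm_nonpos (by lia)
  rw [hzero, mulVec_zero, dotProduct_zero] at hnorm
  lia

lemma eq_neg_simpleRoot (h : IsRoot A α) (hi : (A *ᵥ α) i = -2) : α = -simpleRoot i := by
  refine eq_neg_of_add_eq_zero_left (hA.eq_zero_of_norm_nonpos ?_)
  rw [hA.norm_add_simpleRoot, h, hi]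
  rfl

omit [DecidableEq ι] in
lemma le_two (h : IsRoot A α) (i : ι) : (A *ᵥ α) i ≤ 2 := by
  have := hA.neg_two_le h.neg i
  rw [mulVec_neg, Pi.neg_apply] at this
  lia

lemma eq_simpleRoot (h : IsRoot A α) (hi : (A *ᵥ α) i = 2) : α = simpleRoot i :=
  neg_injective (hA.eq_neg_simpleRoot h.neg (by rw [mulVec_neg, Pi.neg_apply, hi]))

lemma norm_sub_simpleRoot (α : ι → ℤ) (i : ι) :
    (α - simpleRoot i) ⬝ᵥ A *ᵥ (α - simpleRoot i) = α ⬝ᵥ A *ᵥ α - 2 * (A *ᵥ α) i + 2 := by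
  have h := hA.norm_add_simpleRoot (α - simpleRoot i) i
  rw [sub_add_cancel, mulVec_sub_simpleRoot, hA.diag] at h
  lia

lemma isRoot_sub_simpleRoot_iff (h : IsRoot A α) :
    IsRoot A (α - simpleRoot i) ↔ (A *ᵥ α) i = 1 := by
  rw [IsRoot, hA.norm_sub_simpleRoot, h]
  lia

lemma isPosRoot_add_simpleRoot_iff (h : IsPosRoot A α) :
    IsPosRoot A (α + simpleRoot i) ↔ (A *ᵥ α) i = -1 :=
  ⟨fun h' => (hA.isRoot_add_simpleRoot_iff h.1).1 h'.1, fun h' =>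
    ⟨(hA.isRoot_add_simpleRoot_iff h.1).2 h', add_nonneg h.2 (Pi.single_nonneg.2 zero_le_one)⟩⟩

lemma isPosRoot_sub_simpleRoot (h : IsPosRoot A α) (hi : (A *ᵥ α) i = 1) :
    IsPosRoot A (α - simpleRoot i) := by
  refine ⟨(hA.isRoot_sub_simpleRoot_iff h.1).2 hi, fun j => ?_⟩
  have hne : α i ≠ 0 := fun h0 => by grind [hA.mulVec_nonpos_of_eq_zero h.2 h0]
  rcases eq_or_ne j i with rfl | hj
  · have : 0 ≤ α j := h.2 j
    simp only [Pi.zero_apply, Pi.sub_apply, Pi.single_eq_same]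
    lia
  · simpa only [Pi.sub_apply, Pi.single_eq_of_ne hj, sub_zero] using h.2 j

omit [DecidableEq ι] in
theorem finite_isRoot : Finite {α // IsRoot A α} := by
  let weights : {α // IsRoot A α} → ι → Set.Icc (-2 : ℤ) 2 := fun α i =>
    ⟨(A *ᵥ α) i, hA.neg_two_le α.2 i, hA.le_two α.2 i⟩
  refine Finite.of_injective weights fun α β hαβ => Subtype.ext (sub_eq_zero.1 ?_)
  have hmul : A *ᵥ α.1 = A *ᵥ β.1 := funext fun i => congr_arg Subtype.val (congr_fun hαβ i)
  exact hA.eq_zero_of_norm_nonpos (by rw [mulVec_sub, hmul, sub_self, dotProduct_zero])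

lemma exists_mulVec_eq_one (h : IsPosRoot A α) (hs : ∀ i, α ≠ simpleRoot i) :
    ∃ i, (A *ᵥ α) i = 1 := by
  by_contra! hne
  have hle : ∀ i, (A *ᵥ α) i ≤ 0 := fun i => by
    have h2 : (A *ᵥ α) i ≠ 2 := fun h2 => hs i (hA.eq_simpleRoot h.1 h2)
    grind [hA.le_two h.1 i, hne i]
  have h2 : α ⬝ᵥ A *ᵥ α = 2 := h.1
  have : α ⬝ᵥ A *ᵥ α ≤ 0 := Finset.sum_nonpos fun i _ =>
    mul_nonpos_of_nonneg_of_nonpos (h.2 i) (hle i)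
  lia

lemma ne_simpleRoot (hi : (A *ᵥ α) i = 1) (j : ι) : α ≠ simpleRoot j := by
  rintro rfl
  rw [mulVec_simpleRoot] at hi
  rcases eq_or_ne i j with rfl | hij
  · grind [hA.diag i]
  · grind [hA.isSimplyLaced hij]

lemma isPosRoot_induction {motive : ∀ α, IsPosRoot A α → Prop}
    (simple : ∀ i, motive (simpleRoot i) (hA.isPosRoot_simpleRoot i))
    (add : ∀ α i (h : IsPosRoot A α) (hi : (A *ᵥ α) i = -1), motive α h →
      motive (α + simpleRoot i) ((hA.isPosRoot_add_simpleRoot_iff h).2 hi))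
    (α : ι → ℤ) (h : IsPosRoot A α) : motive α h := by
  induction hn : (height α).toNat using Nat.strong_induction_on generalizing α with
  | _ n ih =>
  by_cases hs : ∃ i, α = simpleRoot i
  · obtain ⟨i, rfl⟩ := hs
    exact simple i
  obtain ⟨i, hi⟩ := hA.exists_mulVec_eq_one h (not_exists.1 hs)
  have hpos := hA.isPosRoot_sub_simpleRoot h hi
  have hlt : (height (α - simpleRoot i)).toNat < n := by
    grind [h.height_pos, height_sub_simpleRoot α i]
  have hi' : (A *ᵥ (α - simpleRoot i)) i = -1 := by
    rw [mulVec_sub_simpleRoot, hi, hA.diag]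
    rfl
  simpa only [sub_add_cancel] using add _ i hpos hi' (ih _ hlt _ hpos rfl)

omit [DecidableEq ι] in
lemma even_norm (α : ι → ℤ) : Even (α ⬝ᵥ A *ᵥ α) := by
  classical
  let φ : (ι → ℤ) →+ ZMod 2 :=
    { toFun := fun β => (β ⬝ᵥ A *ᵥ β : ℤ)
      map_zero' := by rw [zero_dotProduct, Int.cast_zero]
      map_add' := fun β γ => by
        rw [hA.norm_add, Int.cast_add, Int.cast_add, Int.cast_mul, Int.cast_ofNat,
          show (2 : ZMod 2) = 0 from rfl, zero_mul, add_zero] }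
  have hφ : φ = 0 := AddMonoidHom.functions_ext' _ _ _ fun i => by
    ext
    change (((simpleRoot i) ⬝ᵥ A *ᵥ (simpleRoot i) : ℤ) : ZMod 2) = 0
    rw [(hA.isPosRoot_simpleRoot i).1]
    rfl
  exact (ZMod.intCast_eq_zero_iff_even).1 (DFunLike.congr_fun hφ α)

omit [DecidableEq ι] in
theorem isPosRoot_or_neg (h : IsRoot A α) : IsPosRoot A α ∨ IsPosRoot A (-α) := by
  have hcross : α⁺ ⬝ᵥ A *ᵥ α⁻ ≤ 0 := by
    refine Finset.sum_nonpos fun i _ => ?_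
    rcases le_total 0 (α i) with hi | hi
    · exact mul_nonpos_of_nonneg_of_nonpos (posPart_nonneg α i)
        (hA.mulVec_nonpos_of_eq_zero (negPart_nonneg α) (negPart_eq_zero.2 hi))
    · rw [show α⁺ i = 0 from posPart_eq_zero.2 hi, zero_mul]
  have hnorm : α⁺ ⬝ᵥ A *ᵥ α⁺ - 2 * (α⁺ ⬝ᵥ A *ᵥ α⁻) + α⁻ ⬝ᵥ A *ᵥ α⁻ = 2 := by
    have := hA.norm_add α⁺ (-α⁻)
    rw [← sub_eq_add_neg, posPart_sub_negPart, h, mulVec_neg, dotProduct_neg, neg_dotProduct_neg]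
      at this
    lia
  rcases eq_or_ne α⁻ 0 with h0 | h0
  · exact .inl ⟨h, negPart_eq_zero.1 h0⟩
  rcases eq_or_ne α⁺ 0 with h1 | h1
  · exact .inr ⟨h.neg, neg_nonneg.2 (posPart_eq_zero.1 h1)⟩
  have hpos := mt (hA.eq_zero_of_norm_nonpos (α := α⁺)) h1
  have hneg := mt (hA.eq_zero_of_norm_nonpos (α := α⁻)) h0
  have hposEven := (hA.even_norm α⁺).two_dvd
  have hnegEven := (hA.even_norm α⁻).two_dvd
  lia

end IsFiniteType

/-- The set of positive roots of height `n + 1`, computed from the simple roots upwards. -/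
def rootLayer (A : Matrix ι ι ℤ) : ℕ → Finset (ι → ℤ)
  | 0 => Finset.univ.image simpleRoot
  | n + 1 => Finset.univ.biUnion fun i =>
      {α ∈ rootLayer A n | (A *ᵥ α) i = -1}.image (· + simpleRoot i)

lemma mem_rootLayer_succ {n : ℕ} : α ∈ rootLayer A (n + 1) ↔
    ∃ i, ∃ β ∈ rootLayer A n, (A *ᵥ β) i = -1 ∧ β + simpleRoot i = α := by
  simp only [rootLayer, Finset.mem_biUnion, Finset.mem_univ, true_and, Finset.mem_image,
    Finset.mem_filter, and_assoc]

theorem mem_rootLayer (hA : IsFiniteType A) {n : ℕ} :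
    α ∈ rootLayer A n ↔ IsPosRoot A α ∧ height α = n + 1 := by
  induction n generalizing α with
  | zero =>
    simp only [rootLayer, Finset.mem_image, Finset.mem_univ, true_and, Nat.cast_zero, zero_add]
    constructor
    · rintro ⟨i, rfl⟩
      exact ⟨hA.isPosRoot_simpleRoot i, height_simpleRoot i⟩
    · rintro ⟨hα, hht⟩
      by_contra! hs
      obtain ⟨i, hi⟩ := hA.exists_mulVec_eq_one hα fun i => (hs i).symm
      have := (hA.isPosRoot_sub_simpleRoot hα hi).height_pos
      rw [height_sub_simpleRoot] at this
      lia
  | succ n ih =>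
    rw [mem_rootLayer_succ]
    constructor
    · rintro ⟨i, β, hβ, hi, rfl⟩
      obtain ⟨hβ, hht⟩ := ih.1 hβ
      refine ⟨(hA.isPosRoot_add_simpleRoot_iff hβ).2 hi, ?_⟩
      rw [height_add_simpleRoot, hht]
      push_cast
      rfl
    · rintro ⟨hα, hht⟩
      obtain ⟨i, hi⟩ := hA.exists_mulVec_eq_one hα fun i h => by
        rw [h, height_simpleRoot] at hht
        lia
      refine ⟨i, α - simpleRoot i, ih.2 ⟨hA.isPosRoot_sub_simpleRoot hα hi, ?_⟩, ?_,
        sub_add_cancel _ _⟩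
      · rw [height_sub_simpleRoot, hht]
        push_cast
        ring
      · rw [mulVec_sub_simpleRoot, hi, hA.diag]
        rfl

end Roots

section SlTwo

open LieModule Module

variable {K L M : Type*} [Field K] [CharZero K] [LieRing L] [LieAlgebra K L] [AddCommGroup M]
  [Module K M] [LieRingModule L M] [LieModule K L M] {h e f : L} {x : M} {μ : K}

omit [CharZero K] in
lemma lie_h_lie_e (t : IsSl2Triple h e f) (hx : ⁅h, x⁆ = μ • x) :
    ⁅h, ⁅e, x⁆⁆ = (μ + 2) • ⁅e, x⁆ := by
  rw [leibniz_lie, t.lie_h_e_smul K, hx, smul_lie, lie_smul, ← add_smul, add_comm]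

omit [CharZero K] in
lemma lie_h_lie_f (t : IsSl2Triple h e f) (hx : ⁅h, x⁆ = μ • x) :
    ⁅h, ⁅f, x⁆⁆ = (μ - 2) • ⁅f, x⁆ := by
  rw [leibniz_lie, t.lie_lie_smul_f K, hx, neg_lie, smul_lie, lie_smul, ← neg_smul, ← add_smul,
    neg_add_eq_sub]

omit [CharZero K] in
lemma lie_h_pow_e (t : IsSl2Triple h e f) (hx : ⁅h, x⁆ = μ • x) (k : ℕ) :
    ⁅h, (toEnd K L M e ^ k) x⁆ = (μ + 2 * k) • (toEnd K L M e ^ k) x := by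
  induction k with
  | zero => rw [pow_zero, Module.End.one_apply, hx, Nat.cast_zero, mul_zero, add_zero]
  | succ k ih =>
    rw [pow_succ', Module.End.mul_apply, toEnd_apply_apply, lie_h_lie_e t ih]
    push_cast
    ring_nf

omit [CharZero K] in
lemma lie_f_pow_e (t : IsSl2Triple h e f) (hx : ⁅h, x⁆ = μ • x) (hef : ⁅e, ⁅f, x⁆⁆ = 0) (k : ℕ) :
    ⁅f, (toEnd K L M e ^ (k + 1)) x⁆ = -((k + 1) * (μ + k)) • (toEnd K L M e ^ k) x := by
  have hfe (y : M) : ⁅f, ⁅e, y⁆⁆ = ⁅e, ⁅f, y⁆⁆ - ⁅h, y⁆ := by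
    rw [leibniz_lie e, t.lie_e_f, add_sub_cancel_left]
  induction k with
  | zero =>
    rw [zero_add, pow_one, toEnd_apply_apply, hfe, hef, hx, pow_zero, Module.End.one_apply]
    module
  | succ k ih =>
    rw [pow_succ', Module.End.mul_apply, toEnd_apply_apply, hfe, ih, lie_smul,
      lie_h_pow_e t hx, ← toEnd_apply_apply K L M e, ← Module.End.mul_apply, ← pow_succ']
    push_cast
    module

variable [FiniteDimensional K M]

-- Here `f eᵏ⁺¹ x` is a nonzero multiple of `eᵏ x`, so `x ≠ 0` would give infinitely many weights.
theorem eq_zero_of_lie_e_lie_f_eq_zero (t : IsSl2Triple h e f) {n : ℕ} (hn : n ≠ 0)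
    (hx : ⁅h, x⁆ = (n : K) • x) (hef : ⁅e, ⁅f, x⁆⁆ = 0) : x = 0 := by
  by_contra hx0
  have hne (k : ℕ) : (toEnd K L M e ^ k) x ≠ 0 := by
    induction k with
    | zero => simpa only [pow_zero, Module.End.one_apply] using hx0
    | succ k ih =>
      intro h0
      have hfe := lie_f_pow_e t hx hef k
      rw [h0, lie_zero, eq_comm, smul_eq_zero_iff_left ih, neg_eq_zero, mul_eq_zero] at hfe
      norm_cast at hfe
      lia
  have hinj : Function.Injective fun k : ℕ => (n + 2 * k : K) := fun k l hkl => by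
    simpa using hkl
  exact Set.infinite_of_injective_forall_mem hinj
    (fun k => Module.End.hasEigenvalue_of_hasEigenvector
      (Module.End.hasEigenvector_iff.2
        ⟨Module.End.mem_eigenspace_iff.2 (lie_h_pow_e t hx k), hne k⟩))
    (Module.End.finite_hasEigenvalue (toEnd K L M h))

theorem lie_f_eq_zero_of_lie_h_eq_zero (t : IsSl2Triple h e f) (he : ⁅e, x⁆ = 0)
    (hh : ⁅h, x⁆ = (0 : K) • x) : ⁅f, x⁆ = 0 := by
  by_contra hf
  have hprim : t.HasPrimitiveVectorWith ⁅f, x⁆ (-2 : K) := by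
    refine ⟨hf, ?_, ?_⟩
    · rw [lie_h_lie_f t hh, zero_sub]
    · rw [leibniz_lie, t.lie_e_f, hh, he, lie_zero, zero_smul, add_zero]
  obtain ⟨n, hn⟩ := hprim.exists_nat
  have : (2 : K) + n = 0 := by rw [← hn, add_neg_cancel]
  norm_cast at this
  lia

omit [CharZero K] in
lemma eq_iSup_inf_eigenspace {N : Submodule K M} (hN : ∀ x ∈ N, ⁅h, x⁆ ∈ N)
    (hdiag : ⨆ μ, (toEnd K L M h).eigenspace μ = ⊤) :
    N = ⨆ μ, N ⊓ (toEnd K L M h).eigenspace μ :=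
  Submodule.eq_iSup_inf_genEigenspace 1 hN hdiag

theorem eq_iSup_inf_eigenspace_natCast (t : IsSl2Triple h e f) {N : Submodule K M}
    (he : ∀ x ∈ N, ⁅e, x⁆ = 0) (hN : ∀ x ∈ N, ⁅h, x⁆ ∈ N)
    (hdiag : ⨆ μ, (toEnd K L M h).eigenspace μ = ⊤) :
    N = ⨆ n : ℕ, N ⊓ (toEnd K L M h).eigenspace (n : K) := by
  refine le_antisymm ?_ (iSup_le fun n => inf_le_left)
  conv_lhs => rw [eq_iSup_inf_eigenspace hN hdiag]
  refine iSup_le fun μ x hx => ?_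
  rcases eq_or_ne x 0 with rfl | hx0
  · exact zero_mem _
  obtain ⟨n, rfl⟩ := IsSl2Triple.HasPrimitiveVectorWith.exists_nat (t := t)
    ⟨hx0, Module.End.mem_eigenspace_iff.1 hx.2, he x hx.1⟩
  exact Submodule.mem_iSup_of_mem n hx

theorem map_e_inf_eigenspace (t : IsSl2Triple h e f) {W : Submodule K M}
    (hWe : ∀ x ∈ W, ⁅e, x⁆ ∈ W) (hWf : ∀ x ∈ W, ⁅f, x⁆ ∈ W) (n : ℕ) :
    (W ⊓ (toEnd K L M h).eigenspace (n : K)).map (toEnd K L M e)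
      = W ⊓ (toEnd K L M h).eigenspace ((n + 2 : ℕ) : K) := by
  apply le_antisymm
  · rintro _ ⟨x, ⟨hxW, hx⟩, rfl⟩
    refine ⟨hWe x hxW, Module.End.mem_eigenspace_iff.2 ?_⟩
    simpa using lie_h_lie_e t (Module.End.mem_eigenspace_iff.1 hx)
  set Q := W ⊓ (toEnd K L M h).eigenspace ((n + 2 : ℕ) : K)
  have hf {x : M} (hx : x ∈ Q) : ⁅f, x⁆ ∈ W ⊓ (toEnd K L M h).eigenspace (n : K) := by
    refine ⟨hWf x hx.1, Module.End.mem_eigenspace_iff.2 ?_⟩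
    simpa using lie_h_lie_f t (Module.End.mem_eigenspace_iff.1 hx.2)
  have hef : ∀ x ∈ Q, (toEnd K L M e * toEnd K L M f) x ∈ Q := fun x hx => by
    refine ⟨hWe _ (hf hx).1, Module.End.mem_eigenspace_iff.2 ?_⟩
    simpa using lie_h_lie_e t (Module.End.mem_eigenspace_iff.1 (hf hx).2)
  have hinj : Function.Injective ((toEnd K L M e * toEnd K L M f).restrict hef) := by
    refine (injective_iff_map_eq_zero _).2 fun x hx => Subtype.ext ?_
    exact eq_zero_of_lie_e_lie_f_eq_zero t (by lia) (Module.End.mem_eigenspace_iff.1 x.2.2)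
      (congr_arg Subtype.val hx)
  intro y hy
  obtain ⟨x, hx⟩ := LinearMap.injective_iff_surjective.1 hinj ⟨y, hy⟩
  exact ⟨⁅f, x.1⁆, hf x.2, congr_arg Subtype.val hx⟩

omit [CharZero K] [LieRing L] [LieAlgebra K L] [LieRingModule L M] [LieModule K L M] in
lemma finrank_inf_ker_add_finrank_map (φ : M →ₗ[K] M) (P : Submodule K M) :
    finrank K ↥(P ⊓ LinearMap.ker φ) + finrank K (P.map φ) = finrank K P := by
  have := (φ.domRestrict P).finrank_range_add_finrank_ker
  rw [LinearMap.range_domRestrict, LinearMap.ker_domRestrict] at this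
  rw [← this, add_comm, ← Submodule.map_comap_subtype, LinearEquiv.finrank_eq
    (Submodule.equivMapOfInjective _ P.injective_subtype _)]

theorem finrank_inf_eigenspace_inf_ker (t : IsSl2Triple h e f) {W : Submodule K M}
    (hWe : ∀ x ∈ W, ⁅e, x⁆ ∈ W) (hWf : ∀ x ∈ W, ⁅f, x⁆ ∈ W) (n : ℕ) :
    finrank K ↥(W ⊓ (toEnd K L M h).eigenspace (n : K) ⊓ LinearMap.ker (toEnd K L M e))
        + finrank K ↥(W ⊓ (toEnd K L M h).eigenspace ((n + 2 : ℕ) : K))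
      = finrank K ↥(W ⊓ (toEnd K L M h).eigenspace (n : K)) := by
  rw [← map_e_inf_eigenspace t hWe hWf, finrank_inf_ker_add_finrank_map]

omit [CharZero K] [LieRing L] [LieAlgebra K L] [LieRingModule L M] [LieModule K L M] in
lemma finrank_iSup_nat_succ {u : ℕ → Submodule K M} (hu : iSupIndep u) :
    finrank K ↥(⨆ n, u n) = finrank K (u 0) + finrank K ↥(⨆ n, u (n + 1)) := by
  have hdisj : Disjoint (u 0) (⨆ n, u (n + 1)) := (hu 0).mono_right
    (iSup_le fun n => le_iSup₂_of_le (n + 1) n.succ_ne_zero le_rfl)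
  rw [← sup_iSup_nat_succ u, ← Submodule.finrank_sup_add_finrank_inf_eq, hdisj.eq_bot,
    finrank_bot, add_zero]

-- Both sides count the irreducible constituents of `M`.
theorem finrank_ker_e (t : IsSl2Triple h e f) (hdiag : ⨆ μ, (toEnd K L M h).eigenspace μ = ⊤) :
    finrank K (LinearMap.ker (toEnd K L M e))
      = finrank K ((toEnd K L M h).eigenspace ((0 : ℕ) : K))
        + finrank K ((toEnd K L M h).eigenspace ((1 : ℕ) : K)) := by
  set u : ℕ → Submodule K M := fun n => (toEnd K L M h).eigenspace (n : K)
  have hu : iSupIndep u := (toEnd K L M h).eigenspaces_iSupIndep.comp Nat.cast_injective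
  have hker : LinearMap.ker (toEnd K L M e) ≤ ⨆ n, u n := by
    rw [eq_iSup_inf_eigenspace_natCast t (N := LinearMap.ker (toEnd K L M e)) (fun x hx => hx)
      (fun x hx => ?_) hdiag]
    · exact iSup_mono fun n => inf_le_right
    · have hx : ⁅e, x⁆ = 0 := hx
      rw [LinearMap.mem_ker, toEnd_apply_apply, leibniz_lie, ← lie_skew e h, hx, lie_zero,
        t.lie_h_e_smul K, neg_lie, smul_lie, hx, smul_zero, neg_zero, add_zero]
  have hmap : (⨆ n, u n).map (toEnd K L M e) = ⨆ n, u (n + 2) := by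
    rw [Submodule.map_iSup]
    congr with n : 1
    simpa only [top_inf_eq] using map_e_inf_eigenspace t (W := ⊤) (fun _ _ => trivial)
      (fun _ _ => trivial) n
  have hrank := finrank_inf_ker_add_finrank_map (toEnd K L M e) (⨆ n, u n)
  have hsplit : finrank K ↥(⨆ n, u (n + 1)) = finrank K (u 1) + finrank K ↥(⨆ n, u (n + 2)) :=
    finrank_iSup_nat_succ (hu.comp (add_left_injective 1))
  rw [inf_eq_right.2 hker, hmap, finrank_iSup_nat_succ hu, hsplit] at hrank
  exact Nat.add_right_cancel (hrank.trans (add_assoc _ _ _).symm)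

end SlTwo

section SerreSystem

variable {ι L : Type*} [LieRing L]

/-- The Chevalley relations between families of generators `E`, `F` and `H`, for the matrix `A`. -/
structure IsChevalleySystem (A : Matrix ι ι ℤ) (E F H : ι → L) : Prop where
  lie_H_H : ∀ i j, ⁅H i, H j⁆ = 0
  lie_E_F_same : ∀ i, ⁅E i, F i⁆ = H i
  lie_E_F_ne : ∀ i j, i ≠ j → ⁅E i, F j⁆ = 0
  lie_H_E : ∀ i j, ⁅H i, E j⁆ = A i j • E j
  lie_H_F : ∀ i j, ⁅H i, F j⁆ = -(A i j • F j)

/-- The Chevalley relations together with the Serre relations of a simply-laced matrix `A`. -/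
structure IsSerreSystem (A : Matrix ι ι ℤ) (E F H : ι → L) : Prop
    extends IsChevalleySystem A E F H where
  lie_E_E : ∀ i j, A i j = 0 → ⁅E i, E j⁆ = 0
  lie_E_lie_E_E : ∀ i j, A i j = -1 → ⁅E i, ⁅E i, E j⁆⁆ = 0
  lie_F_F : ∀ i j, A i j = 0 → ⁅F i, F j⁆ = 0
  lie_F_lie_F_F : ∀ i j, A i j = -1 → ⁅F i, ⁅F i, F j⁆⁆ = 0

variable {A : Matrix ι ι ℤ} {E F H : ι → L}

lemma IsChevalleySystem.swap (hS : IsChevalleySystem A E F H) : IsChevalleySystem A F E (-H) where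
  lie_H_H i j := by rw [Pi.neg_apply, Pi.neg_apply, neg_lie, lie_neg, neg_neg, hS.lie_H_H]
  lie_E_F_same i := by rw [← lie_skew, hS.lie_E_F_same, Pi.neg_apply]
  lie_E_F_ne i j hij := by rw [← lie_skew, hS.lie_E_F_ne j i hij.symm, neg_zero]
  lie_H_E i j := by rw [Pi.neg_apply, neg_lie, hS.lie_H_F, neg_neg]
  lie_H_F i j := by rw [Pi.neg_apply, neg_lie, hS.lie_H_E]

lemma IsSerreSystem.swap (hS : IsSerreSystem A E F H) : IsSerreSystem A F E (-H) where
  toIsChevalleySystem := hS.toIsChevalleySystem.swap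
  lie_E_E := hS.lie_F_F
  lie_E_lie_E_E := hS.lie_F_lie_F_F
  lie_F_F := hS.lie_E_E
  lie_F_lie_F_F := hS.lie_E_lie_E_E

end SerreSystem

section RootVectors

/-- A choice of signs of the simple roots which alternates along the edges of the Dynkin diagram. -/
def IsAlternating {ι : Type*} (A : Matrix ι ι ℤ) (ε : ι → ℤˣ) : Prop :=
  ∀ i j, A i j = -1 → ε j = -ε i

lemma IsAlternating.neg {ι : Type*} {A : Matrix ι ι ℤ} {ε : ι → ℤˣ} (hε : IsAlternating A ε) :
    IsAlternating A (-ε) :=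
  fun i j hij => congr_arg Neg.neg (hε i j hij)

variable {ι L : Type*} [Fintype ι] [DecidableEq ι] [LieRing L]
  {A : Matrix ι ι ℤ} {E F H : ι → L} {ε : ι → ℤˣ} {α β : ι → ℤ} {i j : ι}

open Classical in
/-- The vector of weight `α` obtained from the generators `E` by adding simple roots one at a time,
normalised by `ε` at the simple roots; it is `0` unless `α` is a positive root. If `ε` is
alternating, it does not depend on the order of the simple roots:
see `lie_E_rootVector`. -/
noncomputable def rootVector (A : Matrix ι ι ℤ) (E : ι → L) (ε : ι → ℤˣ) (α : ι → ℤ) : L :=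
  if h : ∃ i, α = simpleRoot i then ε h.choose • E h.choose
  else if h : IsPosRoot A α ∧ ∃ i, (A *ᵥ α) i = 1 then
    ⁅E h.2.choose, rootVector A E ε (α - simpleRoot h.2.choose)⁆
  else 0
termination_by (height α).toNat
decreasing_by
  have := h.1.height_pos
  rw [height_sub_simpleRoot]
  lia

lemma rootVector_simpleRoot (A : Matrix ι ι ℤ) (E : ι → L) (ε : ι → ℤˣ) (i : ι) :
    rootVector A E ε (simpleRoot i) = ε i • E i := by
  have h : ∃ j, simpleRoot i = simpleRoot j := ⟨i, rfl⟩
  have hi : h.choose = i := by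
    by_contra hne
    exact one_ne_zero (α := ℤ) ((Pi.single_eq_same i 1).symm.trans
      ((congr_fun h.choose_spec i).trans (Pi.single_eq_of_ne' hne 1)))
  rw [rootVector, dif_pos h, hi]

lemma rootVector_of_not_isPosRoot (hA : IsFiniteType A) (h : ¬ IsPosRoot A α) :
    rootVector A E ε α = 0 := by
  rw [rootVector, dif_neg, dif_neg fun h' => h h'.1]
  rintro ⟨i, rfl⟩
  exact h (hA.isPosRoot_simpleRoot i)

-- Any two ways of reaching `α` pass through a common root, or `α` is a sum of two simple roots.
theorem lie_E_rootVector_sub (hA : IsFiniteType A) (hS : IsSerreSystem A E F H)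
    (hε : IsAlternating A ε) (hα : IsPosRoot A α) (hi : (A *ᵥ α) i = 1) :
    ⁅E i, rootVector A E ε (α - simpleRoot i)⁆ = rootVector A E ε α := by
  induction hn : (height α).toNat using Nat.strong_induction_on generalizing α i with
  | _ n ih =>
  have h : IsPosRoot A α ∧ ∃ i, (A *ᵥ α) i = 1 := ⟨hα, i, hi⟩
  rw [rootVector.eq_1 A E ε α, dif_neg (not_exists.2 (hA.ne_simpleRoot hi)), dif_pos h]
  have hp := h.2.choose_spec
  set p := h.2.choose
  rcases eq_or_ne i p with hip | hip
  · rw [hip]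
  have ih' {k} (hk : (A *ᵥ α) k = 1) {l} (hl : (A *ᵥ (α - simpleRoot k)) l = 1) :=
    ih _ (by grind [hα.height_pos, height_sub_simpleRoot α k]) (hA.isPosRoot_sub_simpleRoot hα hk)
      hl rfl
  have hwi : (A *ᵥ (α - simpleRoot p)) i = 1 - A i p := by rw [mulVec_sub_simpleRoot, hi]
  have hwp : (A *ᵥ (α - simpleRoot i)) p = 1 - A i p := by
    rw [mulVec_sub_simpleRoot, hp, hA.apply_comm]
  rcases hA.isSimplyLaced hip with h0 | h1
  · rw [h0, sub_zero] at hwi hwp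
    rw [← ih' hp hwi, ← ih' hi hwp, leibniz_lie, hS.lie_E_E i p h0, zero_lie, zero_add,
      sub_right_comm]
  · rw [h1] at hwi hwp
    rw [hA.eq_simpleRoot (hA.isPosRoot_sub_simpleRoot hα hp).1 hwi,
      hA.eq_simpleRoot (hA.isPosRoot_sub_simpleRoot hα hi).1 hwp, rootVector_simpleRoot,
      rootVector_simpleRoot, hε i p h1, Units.neg_smul, lie_neg, ← lie_neg, ← lie_skew]
    simp only [Units.smul_def, lie_smul, neg_lie, neg_neg, smul_lie]

omit [Fintype ι] [DecidableEq ι] in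
lemma lie_E_lie_E_lie_E_eq_zero (hS : IsSerreSystem A E F H) [IsAddTorsionFree L] {x : L}
    (hij : A i j = -1) (hj : ⁅E j, x⁆ = 0) (hi : ⁅E i, ⁅E i, x⁆⁆ = 0) :
    ⁅E i, ⁅E j, ⁅E i, x⁆⁆⁆ = 0 := by
  have hserre : ⁅⁅E i, ⁅E i, E j⁆⁆, x⁆ = 0 := by rw [hS.lie_E_lie_E_E i j hij, zero_lie]
  rw [lie_lie, lie_lie, lie_lie, hj, lie_zero, zero_sub, hi, lie_zero, sub_zero, lie_neg,
    ← neg_add', neg_eq_zero, ← two_nsmul] at hserre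
  exact (smul_eq_zero_iff_right two_ne_zero).1 hserre

lemma lie_E_lie_E_rootVector (hA : IsFiniteType A) (hS : IsSerreSystem A E F H)
    (hε : IsAlternating A ε) (hβ : IsPosRoot A β) (hi : (A *ᵥ β) i = -1)
    (ih : ∀ γ k, IsPosRoot A γ → height γ ≤ height β → 0 ≤ (A *ᵥ γ) k →
      ⁅E k, rootVector A E ε γ⁆ = 0) :
    ⁅E i, ⁅E i, rootVector A E ε β⁆⁆ = 0 := by
  by_cases hs : ∃ m, β = simpleRoot m
  · obtain ⟨m, rfl⟩ := hs
    rw [mulVec_simpleRoot] at hi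
    rw [rootVector_simpleRoot, Units.smul_def, lie_smul, lie_smul, hS.lie_E_lie_E_E i m hi,
      smul_zero]
  obtain ⟨m, hm⟩ := hA.exists_mulVec_eq_one hβ (not_exists.1 hs)
  have hpos := hA.isPosRoot_sub_simpleRoot hβ hm
  have hht := height_sub_simpleRoot β m
  have hwi := mulVec_sub_simpleRoot A β i m
  rw [← lie_E_rootVector_sub hA hS hε hβ hm]
  set μ := β - simpleRoot m
  have him : i ≠ m := by
    rintro rfl
    lia
  rcases hA.isSimplyLaced him with h0 | h1
  · have hadd : IsPosRoot A (μ + simpleRoot i) := (hA.isPosRoot_add_simpleRoot_iff hpos).2 (by lia)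
    have hwadd : (A *ᵥ (μ + simpleRoot i)) i = 1 := by
      grind [mulVec_add_simpleRoot A μ i i, hA.diag i]
    have hrec := lie_E_rootVector_sub hA hS hε hadd hwadd
    rw [add_sub_cancel_right] at hrec
    rw [leibniz_lie (E i) (E m), hS.lie_E_E i m h0, zero_lie, zero_add, hrec, leibniz_lie,
      hS.lie_E_E i m h0, zero_lie, zero_add,
      ih _ i hadd (by grind [height_add_simpleRoot μ i]) (by lia), lie_zero]
  · have hzero := ih μ i hpos (by lia) (by lia)
    rw [leibniz_lie (E i) (E m), hzero, lie_zero, add_zero, leibniz_lie, hzero, lie_zero, add_zero,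
      hS.lie_E_lie_E_E i m h1, zero_lie]

theorem lie_E_rootVector_eq_zero (hA : IsFiniteType A) (hS : IsSerreSystem A E F H)
    [IsAddTorsionFree L] (hε : IsAlternating A ε) (hβ : IsPosRoot A β)
    (hi : 0 ≤ (A *ᵥ β) i) : ⁅E i, rootVector A E ε β⁆ = 0 := by
  induction hn : (height β).toNat using Nat.strong_induction_on generalizing β i with
  | _ n ih =>
  have ih' (γ k) (hγ : IsPosRoot A γ) (hlt : height γ < height β) :=
    ih _ (by grind [hγ.height_pos]) hγ (i := k) (hn := rfl)
  by_cases hs : ∃ j, β = simpleRoot j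
  · obtain ⟨j, rfl⟩ := hs
    rw [mulVec_simpleRoot] at hi
    rw [rootVector_simpleRoot, Units.smul_def, lie_smul]
    rcases eq_or_ne i j with rfl | hij
    · rw [lie_self, smul_zero]
    · rw [hS.lie_E_E i j (by grind [hA.isSimplyLaced hij]), smul_zero]
  obtain ⟨j, hj⟩ := hA.exists_mulVec_eq_one hβ (not_exists.1 hs)
  have hpos := hA.isPosRoot_sub_simpleRoot hβ hj
  have hht := height_sub_simpleRoot β j
  have hwi := mulVec_sub_simpleRoot A β i j
  have hwj := mulVec_sub_simpleRoot A β j j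
  rw [← lie_E_rootVector_sub hA hS hε hβ hj]
  set γ := β - simpleRoot j
  rcases eq_or_ne i j with rfl | hij
  · exact lie_E_lie_E_rootVector hA hS hε hpos (by grind [hA.diag i])
      fun δ k hδ hle => ih' δ k hδ (by lia)
  rcases hA.isSimplyLaced hij with h0 | h1
  · rw [leibniz_lie, hS.lie_E_E i j h0, zero_lie, zero_add,
      ih' γ i hpos (by lia) (by lia), lie_zero]
  by_cases h2 : (A *ᵥ γ) i = 2
  · rw [hA.eq_simpleRoot hpos.1 h2, rootVector_simpleRoot, Units.smul_def, lie_smul, lie_smul,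
      ← lie_skew (E j), lie_neg, hS.lie_E_lie_E_E i j h1, neg_zero, smul_zero]
  have h1' : (A *ᵥ γ) i = 1 := by grind [hA.le_two hpos.1 i]
  rw [← lie_E_rootVector_sub hA hS hε hpos h1']
  refine lie_E_lie_E_lie_E_eq_zero hS h1 ?_ ?_
  · refine ih' _ j (hA.isPosRoot_sub_simpleRoot hpos h1') ?_ ?_
    · grind [height_sub_simpleRoot γ i]
    · grind [mulVec_sub_simpleRoot A γ j i, hA.apply_comm i j, hA.diag j]
  · rw [lie_E_rootVector_sub hA hS hε hpos h1']
    exact ih' γ i hpos (by lia) (by lia)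

theorem lie_E_rootVector (hA : IsFiniteType A) (hS : IsSerreSystem A E F H)
    [IsAddTorsionFree L] (hε : IsAlternating A ε) (hβ : IsPosRoot A β) (i : ι) :
    ⁅E i, rootVector A E ε β⁆ = rootVector A E ε (β + simpleRoot i) := by
  have hadd := hA.isPosRoot_add_simpleRoot_iff (i := i) hβ
  rcases le_or_gt 0 ((A *ᵥ β) i) with hi | hi
  · rw [lie_E_rootVector_eq_zero hA hS hε hβ hi, rootVector_of_not_isPosRoot hA]
    lia
  have hne : (A *ᵥ β) i ≠ -2 := fun h2 =>
    (hA.isPosRoot_simpleRoot i).not_isPosRoot_neg (hA.eq_neg_simpleRoot hβ.1 h2 ▸ hβ)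
  have hi' : (A *ᵥ β) i = -1 := by grind [hA.neg_two_le hβ.1 i]
  rw [← lie_E_rootVector_sub hA hS hε (hadd.2 hi'), add_sub_cancel_right]
  rw [mulVec_add_simpleRoot, hi', hA.diag]
  rfl

theorem lie_H_rootVector (hA : IsFiniteType A) (hS : IsSerreSystem A E F H)
    [IsAddTorsionFree L] (hε : IsAlternating A ε) (i : ι) (β : ι → ℤ) :
    ⁅H i, rootVector A E ε β⁆ = (A *ᵥ β) i • rootVector A E ε β := by
  by_cases hβ : IsPosRoot A β
  swap
  · rw [rootVector_of_not_isPosRoot hA hβ, lie_zero, smul_zero]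
  induction β, hβ using hA.isPosRoot_induction with
  | simple j =>
    rw [rootVector_simpleRoot, mulVec_simpleRoot, Units.smul_def, lie_smul, hS.lie_H_E, smul_comm]
  | add β j hβ hj ih =>
    rw [← lie_E_rootVector hA hS hε hβ, leibniz_lie, hS.lie_H_E, ih, smul_lie, lie_smul, ← add_smul,
      mulVec_add_simpleRoot, add_comm]

lemma lie_F_rootVector_simpleRoot (hS : IsSerreSystem A E F H) (ε : ι → ℤˣ) (i : ι) :
    ⁅F i, rootVector A E ε (simpleRoot i)⁆ = -(ε i • H i) := by
  rw [rootVector_simpleRoot, Units.smul_def, lie_smul, ← lie_skew, hS.lie_E_F_same, smul_neg,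
    Units.smul_def]

lemma IsFiniteType.not_isRoot_sub_simpleRoot (hA : IsFiniteType A) (hi : (A *ᵥ β) i = -1) :
    ¬ IsRoot A (β - simpleRoot i) := fun h => by
  have := hA.neg_two_le h i
  rw [mulVec_sub_simpleRoot, hi, hA.diag] at this
  lia

-- If `β + αⱼ - αᵢ` is a root for `i ≠ j`, then so is `β - αᵢ`, unless `β = αᵢ`.
lemma IsFiniteType.isPosRoot_sub_simpleRoot_of_add_sub (hA : IsFiniteType A) (hij : i ≠ j)
    (hj : (A *ᵥ β) j = -1) (hβ : β ≠ simpleRoot i)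
    (h : IsPosRoot A (β + simpleRoot j - simpleRoot i)) : IsPosRoot A (β - simpleRoot i) := by
  have hw : (A *ᵥ (β + simpleRoot j - simpleRoot i)) j = 1 - A i j := by
    rw [mulVec_sub_simpleRoot, mulVec_add_simpleRoot, hj, hA.diag, hA.apply_comm]
    rfl
  rw [add_sub_right_comm] at h hw
  rcases hA.isSimplyLaced hij with h0 | h1
  · rw [← add_sub_cancel_right (β - simpleRoot i) (simpleRoot j)]
    exact hA.isPosRoot_sub_simpleRoot h (by rw [hw, h0, sub_zero])
  · exact absurd (sub_eq_zero.1 (add_eq_right.1 (hA.eq_simpleRoot h.1 (by rw [hw, h1]; rfl)))) hβ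

theorem lie_F_rootVector (hA : IsFiniteType A) (hS : IsSerreSystem A E F H)
    [IsAddTorsionFree L] (hε : IsAlternating A ε) (hβ : IsPosRoot A β)
    (hi : β ≠ simpleRoot i) :
    ⁅F i, rootVector A E ε β⁆ = rootVector A E ε (β - simpleRoot i) := by
  induction β, hβ using hA.isPosRoot_induction with
  | simple j =>
    have hij : j ≠ i := fun h => hi (h ▸ rfl)
    rw [rootVector_simpleRoot, Units.smul_def, lie_smul, ← lie_skew, hS.lie_E_F_ne j i hij,
      neg_zero, smul_zero, rootVector_of_not_isPosRoot hA]
    intro h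
    simpa [hij] using h.2 i
  | add β j hβ hj ih =>
    rw [← lie_E_rootVector hA hS hε hβ, leibniz_lie, ← lie_skew (F i)]
    rcases eq_or_ne i j with rfl | hij
    · have hne : β ≠ simpleRoot i := by
        rintro rfl
        grind [mulVec_simpleRoot A i i, hA.diag i]
      rw [ih hne, rootVector_of_not_isPosRoot hA
        (mt And.left (hA.not_isRoot_sub_simpleRoot hj)), lie_zero, add_zero,
        hS.lie_E_F_same, neg_lie, lie_H_rootVector hA hS hε, hj, neg_one_zsmul, neg_neg,
        add_sub_cancel_right]
    rw [hS.lie_E_F_ne j i hij.symm, neg_zero, zero_lie, zero_add]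
    by_cases hne : β = simpleRoot i
    · rw [hne, mulVec_simpleRoot] at hj
      rw [hne, lie_F_rootVector_simpleRoot hS, add_sub_cancel_left, rootVector_simpleRoot,
        hε i j (hA.apply_comm i j ▸ hj), ← lie_skew, neg_lie, neg_neg, Units.smul_def, smul_lie,
        hS.lie_H_E, hA.apply_comm, hj, Units.neg_smul, Units.smul_def, smul_comm, neg_one_zsmul]
    rw [ih hne]
    by_cases hsub : IsPosRoot A (β - simpleRoot i)
    · rw [lie_E_rootVector hA hS hε hsub, add_sub_right_comm]
    · rw [rootVector_of_not_isPosRoot hA hsub, rootVector_of_not_isPosRoot hA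
        (mt (hA.isPosRoot_sub_simpleRoot_of_add_sub hij hj hne) hsub), lie_zero]

end RootVectors

section RootElements

open Module

variable {ι L : Type*} [Fintype ι] [DecidableEq ι] [LieRing L]
  {A : Matrix ι ι ℤ} {E F H : ι → L} {ε : ι → ℤˣ} {α β : ι → ℤ} {i j : ι}

/-- The root vectors of a Serre system: `rootVector` for a positive root and its image under the
Chevalley involution for a negative one. At most one of the two terms is nonzero. -/
noncomputable def rootElement (A : Matrix ι ι ℤ) (E F : ι → L) (ε : ι → ℤˣ) (α : ι → ℤ) : L :=
  rootVector A E ε α + rootVector A F (-ε) (-α)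

lemma rootElement_swap (A : Matrix ι ι ℤ) (E F : ι → L) (ε : ι → ℤˣ) (α : ι → ℤ) :
    rootElement A F E (-ε) (-α) = rootElement A E F ε α := by
  rw [rootElement, rootElement, neg_neg, neg_neg, add_comm]

lemma rootElement_of_isPosRoot (hA : IsFiniteType A) (hα : IsPosRoot A α) :
    rootElement A E F ε α = rootVector A E ε α := by
  rw [rootElement, rootVector_of_not_isPosRoot hA hα.not_isPosRoot_neg, add_zero]

lemma rootElement_of_isPosRoot_neg (hA : IsFiniteType A) (hα : IsPosRoot A (-α)) :
    rootElement A E F ε α = rootVector A F (-ε) (-α) := by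
  rw [← rootElement_swap, rootElement_of_isPosRoot hA hα]

lemma rootElement_of_not_isRoot (hA : IsFiniteType A) (h : ¬ IsRoot A α) :
    rootElement A E F ε α = 0 := by
  have hneg : ¬ IsRoot A (-α) := fun h' => h (neg_neg α ▸ h'.neg)
  rw [rootElement, rootVector_of_not_isPosRoot hA (mt And.left h),
    rootVector_of_not_isPosRoot hA (mt And.left hneg), add_zero]

lemma rootElement_simpleRoot (hA : IsFiniteType A) (E F : ι → L) (ε : ι → ℤˣ) (i : ι) :
    rootElement A E F ε (simpleRoot i) = ε i • E i := by
  rw [rootElement_of_isPosRoot hA (hA.isPosRoot_simpleRoot i), rootVector_simpleRoot]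

lemma rootElement_neg_simpleRoot (hA : IsFiniteType A) (E F : ι → L) (ε : ι → ℤˣ) (i : ι) :
    rootElement A E F ε (-simpleRoot i) = -(ε i • F i) := by
  rw [← rootElement_swap, neg_neg, rootElement_simpleRoot hA, Pi.neg_apply, Units.neg_smul]

lemma lie_E_rootElement_neg_simpleRoot (hA : IsFiniteType A) (hS : IsChevalleySystem A E F H)
    (ε : ι → ℤˣ) (i : ι) : ⁅E i, rootElement A E F ε (-simpleRoot i)⁆ = -(ε i • H i) := by
  rw [rootElement_neg_simpleRoot hA, lie_neg, Units.smul_def, lie_smul, hS.lie_E_F_same,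
    Units.smul_def]

lemma lie_F_rootElement_simpleRoot (hA : IsFiniteType A) (hS : IsChevalleySystem A E F H)
    (ε : ι → ℤˣ) (i : ι) : ⁅F i, rootElement A E F ε (simpleRoot i)⁆ = -(ε i • H i) := by
  rw [← rootElement_swap, lie_E_rootElement_neg_simpleRoot hA hS.swap, Pi.neg_apply, Pi.neg_apply,
    Units.neg_smul, smul_neg, neg_neg]

variable [IsAddTorsionFree L]

theorem lie_E_rootElement (hA : IsFiniteType A) (hS : IsSerreSystem A E F H)
    (hε : IsAlternating A ε) (hα : IsRoot A α) (hi : α ≠ -simpleRoot i) :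
    ⁅E i, rootElement A E F ε α⁆ = rootElement A E F ε (α + simpleRoot i) := by
  rcases hA.isPosRoot_or_neg hα with h | h
  · have hneg : ¬ IsPosRoot A (-(α + simpleRoot i)) := fun h' => by
      have := h'.height_pos
      have := h.height_pos
      grind [height_neg (α + simpleRoot i), height_add_simpleRoot α i]
    rw [rootElement_of_isPosRoot hA h, lie_E_rootVector hA hS hε h, rootElement,
      rootVector_of_not_isPosRoot hA hneg, add_zero]
  · have hpos : ¬ IsPosRoot A (α + simpleRoot i) := fun h' => by
      have := h'.height_pos
      have := h.height_pos
      grind [height_neg α, height_add_simpleRoot α i]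
    rw [rootElement_of_isPosRoot_neg hA h, rootElement, rootVector_of_not_isPosRoot hA hpos,
      zero_add, neg_add, ← sub_eq_add_neg]
    exact lie_F_rootVector hA hS.swap hε.neg h
      fun h' => hi (neg_eq_iff_eq_neg.1 h')

theorem lie_F_rootElement (hA : IsFiniteType A) (hS : IsSerreSystem A E F H)
    (hε : IsAlternating A ε) (hα : IsRoot A α) (hi : α ≠ simpleRoot i) :
    ⁅F i, rootElement A E F ε α⁆ = rootElement A E F ε (α - simpleRoot i) := by
  rw [← rootElement_swap, lie_E_rootElement (ε := -ε) hA hS.swap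
    hε.neg hα.neg (neg_injective.ne hi), ← rootElement_swap A E F ε (α - simpleRoot i),
    neg_sub, sub_eq_neg_add]

theorem lie_H_rootElement (hA : IsFiniteType A) (hS : IsSerreSystem A E F H)
    (hε : IsAlternating A ε) (i : ι) (α : ι → ℤ) :
    ⁅H i, rootElement A E F ε α⁆ = (A *ᵥ α) i • rootElement A E F ε α := by
  have hneg := lie_H_rootVector hA hS.swap hε.neg i (-α)
  rw [mulVec_neg, Pi.neg_apply, Pi.neg_apply, neg_lie, neg_smul, neg_inj] at hneg
  rw [rootElement, lie_add, lie_H_rootVector hA hS hε, smul_add]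
  exact congr_arg _ hneg

lemma rootVector_ne_zero (hA : IsFiniteType A) (hS : IsSerreSystem A E F H)
    (hε : IsAlternating A ε) (hE : ∀ i, E i ≠ 0) (hα : IsPosRoot A α) :
    rootVector A E ε α ≠ 0 := by
  induction α, hα using hA.isPosRoot_induction with
  | simple i =>
    rw [rootVector_simpleRoot]
    exact (smul_ne_zero_iff_ne _).2 (hE i)
  | add α i hα hi ih =>
    intro h0
    have hne := hA.ne_simpleRoot (α := α + simpleRoot i) (i := i)
      (by rw [mulVec_add_simpleRoot, hi, hA.diag]; rfl) i
    have hF := lie_F_rootVector hA hS hε ((hA.isPosRoot_add_simpleRoot_iff hα).2 hi) hne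
    rw [h0, lie_zero, add_sub_cancel_right] at hF
    exact ih hF.symm

theorem rootElement_ne_zero (hA : IsFiniteType A) (hS : IsSerreSystem A E F H)
    (hε : IsAlternating A ε) (hE : ∀ i, E i ≠ 0) (hF : ∀ i, F i ≠ 0)
    (hα : IsRoot A α) : rootElement A E F ε α ≠ 0 := by
  rcases hA.isPosRoot_or_neg hα with h | h
  · rw [rootElement_of_isPosRoot hA h]
    exact rootVector_ne_zero hA hS hε hE h
  · rw [rootElement_of_isPosRoot_neg hA h]
    exact rootVector_ne_zero hA hS.swap hε.neg hF h

/-- The element of the Cartan subalgebra with coordinates `c` in the simple coroots. -/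
def cartan (H : ι → L) (c : ι → ℤ) : L := ∑ i, c i • H i

omit [IsAddTorsionFree L] in
lemma cartan_simpleRoot (H : ι → L) (i : ι) : cartan H (simpleRoot i) = H i := by
  simp only [cartan, Pi.single_apply, ite_smul, one_smul, zero_smul, Finset.sum_ite_eq',
    Finset.mem_univ, if_true]

omit [DecidableEq ι] [IsAddTorsionFree L] in
lemma cartan_add (H : ι → L) (c d : ι → ℤ) : cartan H (c + d) = cartan H c + cartan H d := by
  simp only [cartan, Pi.add_apply, add_smul, Finset.sum_add_distrib]

omit [DecidableEq ι] [IsAddTorsionFree L] in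
lemma lie_F_cartan (hA : IsFiniteType A) (hS : IsChevalleySystem A E F H) (c : ι → ℤ) (i : ι) :
    ⁅F i, cartan H c⁆ = (A *ᵥ c) i • F i := by
  rw [← lie_skew, cartan, sum_lie]
  simp only [smul_lie, hS.lie_H_F, smul_neg, smul_smul, Finset.sum_neg_distrib, neg_neg,
    ← Finset.sum_smul, mulVec, dotProduct, hA.apply_comm i, mul_comm]

omit [DecidableEq ι] [IsAddTorsionFree L] in
lemma lie_cartan_cartan (hS : IsChevalleySystem A E F H) (c d : ι → ℤ) :
    ⁅cartan H c, cartan H d⁆ = 0 := by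
  simp only [cartan, sum_lie, lie_sum, smul_lie, lie_smul, hS.lie_H_H, smul_zero,
    Finset.sum_const_zero]

theorem lie_rootElement_neg (hA : IsFiniteType A) (hS : IsSerreSystem A E F H)
    (hε : IsAlternating A ε) (hα : IsPosRoot A α) :
    ⁅rootElement A E F ε α, rootElement A E F ε (-α)⁆ = (height α).negOnePow • cartan H α := by
  induction α, hα using hA.isPosRoot_induction with
  | simple i =>
    rw [rootElement_simpleRoot hA, Units.smul_def, smul_lie,
      lie_E_rootElement_neg_simpleRoot hA hS.toIsChevalleySystem, height_simpleRoot,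
      cartan_simpleRoot, smul_neg, ← Units.smul_def, smul_smul, Int.units_mul_self, one_smul,
      Int.negOnePow_one, Units.neg_smul, one_smul]
  | add β i hβ hi ih =>
    have hβ_ne : β ≠ simpleRoot i := by
      rintro rfl
      rw [mulVec_simpleRoot, hA.diag] at hi
      lia
    have hβ_ne_neg : β ≠ -simpleRoot i := by
      rintro rfl
      rw [mulVec_neg, Pi.neg_apply, mulVec_simpleRoot, hA.diag] at hi
      lia
    have hγ : IsPosRoot A (β + simpleRoot i) := (hA.isPosRoot_add_simpleRoot_iff hβ).2 hi
    have hγ_ne : β + simpleRoot i ≠ simpleRoot i :=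
      hA.ne_simpleRoot (by rw [mulVec_add_simpleRoot, hi, hA.diag]; rfl) i
    have hFβ : ⁅F i, rootElement A E F ε β⁆ = 0 := by
      rw [lie_F_rootElement hA hS hε hβ.1 hβ_ne,
        rootElement_of_not_isRoot hA (hA.not_isRoot_sub_simpleRoot hi)]
    have hF := leibniz_lie (F i) (rootElement A E F ε β) (rootElement A E F ε (-β))
    have hE := leibniz_lie (E i) (rootElement A E F ε β) (rootElement A E F ε (-(β + simpleRoot i)))
    rw [ih, hFβ, zero_lie, zero_add, lie_F_rootElement hA hS hε hβ.1.neg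
      (fun h => hβ_ne_neg (neg_eq_iff_eq_neg.1 h)), ← neg_add', Units.smul_def, lie_smul,
      lie_F_cartan hA hS.toIsChevalleySystem, hi, neg_one_smul, smul_neg] at hF
    rw [← hF, lie_neg, lie_smul, hS.lie_E_F_same, lie_E_rootElement hA hS hε hβ.1 hβ_ne_neg,
      lie_E_rootElement hA hS hε hγ.1.neg (neg_injective.ne hγ_ne), neg_add_rev,
      neg_add_cancel_comm, ih, ← neg_add_rev] at hE
    rw [height_add_simpleRoot, Int.negOnePow_succ, cartan_add, cartan_simpleRoot, Units.neg_smul,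
      smul_add, eq_sub_of_add_eq hE.symm, Units.smul_def _ (H i), neg_add_rev, sub_eq_add_neg]

end RootElements

section Basis

open Module LieAlgebra

lemma IsFiniteType.eq_zero_of_mulVec_eq_zero {ι : Type*} [Fintype ι] {A : Matrix ι ι ℤ}
    (hA : IsFiniteType A) {α : ι → ℤ} (h : A *ᵥ α = 0) : α = 0 :=
  hA.eq_zero_of_norm_nonpos (by rw [h, dotProduct_zero])

lemma IsFiniteType.det_map_ne_zero {ι : Type*} [Fintype ι] [DecidableEq ι] {A : Matrix ι ι ℤ}
    (hA : IsFiniteType A) (K : Type*) [CommRing K] [CharZero K] :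
    (A.map (Int.castRingHom K)).det ≠ 0 := by
  rw [← RingHom.mapMatrix_apply, ← RingHom.map_det, eq_intCast, Int.cast_ne_zero, ne_eq,
    ← exists_mulVec_eq_zero_iff]
  rintro ⟨v, hv, hAv⟩
  exact hv (hA.eq_zero_of_mulVec_eq_zero hAv)

variable {ι K L : Type*} [Field K] [LieRing L] [LieAlgebra K L]
  {A : Matrix ι ι ℤ} {E F H : ι → L} {ε : ι → ℤˣ} {α β : ι → ℤ} {i j : ι}

variable (K) in
/-- Nonzero elements `E i`, `F i`, `H i` which satisfy the relations of Serre's presentation and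
generate the Lie algebra. -/
structure IsSerreGenerators (A : Matrix ι ι ℤ) (E F H : ι → L) : Prop
    extends IsSerreSystem A E F H where
  E_ne_zero : ∀ i, E i ≠ 0
  lieSpan_eq_top : LieSubalgebra.lieSpan K L (Set.range E ∪ Set.range F) = ⊤

lemma IsChevalleySystem.F_ne_zero [IsAddTorsionFree L] (hS : IsChevalleySystem A E F H)
    (hA : ∀ i, A i i = 2) (hE : ∀ i, E i ≠ 0) (i : ι) : F i ≠ 0 := by
  intro hF
  have h := hS.lie_H_E i i
  rw [← hS.lie_E_F_same, hF, lie_zero, zero_lie, hA, eq_comm,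
    smul_eq_zero_iff_right two_ne_zero] at h
  exact hE i h

theorem linearIndependent_of_lie_E [Finite ι] [CharZero K] (hA : IsFiniteType A)
    (hS : IsChevalleySystem A E F H) (hE : ∀ i, E i ≠ 0) : LinearIndependent K H := by
  classical
  have := Fintype.ofFinite ι
  rw [Fintype.linearIndependent_iff]
  intro c hc
  refine congr_fun (eq_zero_of_vecMul_eq_zero (hA.det_map_ne_zero K) (funext fun j => ?_))
  have h : (c ᵥ* A.map (Int.castRingHom K)) j • E j = ⁅∑ i, c i • H i, E j⁆ := by
    simp only [sum_lie, smul_lie, hS.lie_H_E, ← Int.cast_smul_eq_zsmul K, smul_smul,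
      ← Finset.sum_smul, vecMul, dotProduct, map_apply, eq_intCast]
  rw [hc, zero_lie] at h
  exact (smul_eq_zero_iff_left (hE j)).1 h

variable [Fintype ι] [DecidableEq ι]

/-- The elements of the Chevalley basis, indexed by the simple coroots and the roots. -/
noncomputable def chevalleyFamily (A : Matrix ι ι ℤ) (E F H : ι → L) (ε : ι → ℤˣ) :
    ι ⊕ {α // IsRoot A α} → L :=
  Sum.elim H fun α => rootElement A E F ε α

/-- The weights of the elements of the Chevalley basis. -/
def weight (A : Matrix ι ι ℤ) : ι ⊕ {α // IsRoot A α} → ι → ℤ := Sum.elim 0 (↑)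

lemma rootElement_mem_span (hA : IsFiniteType A) (E F H : ι → L) (ε : ι → ℤˣ) (α : ι → ℤ) :
    rootElement A E F ε α ∈ Submodule.span K (Set.range (chevalleyFamily A E F H ε)) := by
  by_cases h : IsRoot A α
  · exact Submodule.subset_span ⟨Sum.inr ⟨α, h⟩, rfl⟩
  · rw [rootElement_of_not_isRoot hA h]
    exact zero_mem _

lemma H_mem_span (A : Matrix ι ι ℤ) (E F H : ι → L) (ε : ι → ℤˣ) (i : ι) :
    H i ∈ Submodule.span K (Set.range (chevalleyFamily A E F H ε)) :=
  Submodule.subset_span ⟨Sum.inl i, rfl⟩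

lemma E_mem_span (hA : IsFiniteType A) (E F H : ι → L) (ε : ι → ℤˣ) (i : ι) :
    E i ∈ Submodule.span K (Set.range (chevalleyFamily A E F H ε)) := by
  have h := zsmul_mem (rootElement_mem_span (K := K) hA E F H ε (simpleRoot i)) (ε i)
  rwa [rootElement_simpleRoot hA, ← Units.smul_def, smul_smul, Int.units_mul_self, one_smul] at h

lemma F_mem_span (hA : IsFiniteType A) (E F H : ι → L) (ε : ι → ℤˣ) (i : ι) :
    F i ∈ Submodule.span K (Set.range (chevalleyFamily A E F H ε)) := by
  have h := zsmul_mem (rootElement_mem_span (K := K) hA E F H ε (-simpleRoot i)) (ε i)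
  rwa [rootElement_neg_simpleRoot hA, smul_neg, neg_mem_iff, ← Units.smul_def, smul_smul,
    Int.units_mul_self, one_smul] at h

variable [IsAddTorsionFree L]

lemma lie_E_mem_span (hA : IsFiniteType A) (hS : IsSerreSystem A E F H) (hε : IsAlternating A ε)
    (i : ι) (k : ι ⊕ {α // IsRoot A α}) :
    ⁅E i, chevalleyFamily A E F H ε k⁆ ∈
      Submodule.span K (Set.range (chevalleyFamily A E F H ε)) := by
  rcases k with j | ⟨α, hα⟩
  · rw [chevalleyFamily, Sum.elim_inl, ← lie_skew, hS.lie_H_E]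
    exact neg_mem (zsmul_mem (E_mem_span hA E F H ε i) _)
  · change ⁅_, rootElement A E F ε α⁆ ∈ _
    by_cases hi : α = -simpleRoot i
    · rw [hi, lie_E_rootElement_neg_simpleRoot hA hS.toIsChevalleySystem]
      exact neg_mem (zsmul_mem (H_mem_span A E F H ε i) _)
    · rw [lie_E_rootElement hA hS hε hα hi]
      exact rootElement_mem_span hA E F H ε _

lemma lie_F_mem_span (hA : IsFiniteType A) (hS : IsSerreSystem A E F H) (hε : IsAlternating A ε)
    (i : ι) (k : ι ⊕ {α // IsRoot A α}) :
    ⁅F i, chevalleyFamily A E F H ε k⁆ ∈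
      Submodule.span K (Set.range (chevalleyFamily A E F H ε)) := by
  rcases k with j | ⟨α, hα⟩
  · rw [chevalleyFamily, Sum.elim_inl, ← lie_skew, hS.lie_H_F, neg_neg]
    exact zsmul_mem (F_mem_span hA E F H ε i) _
  · change ⁅_, rootElement A E F ε α⁆ ∈ _
    by_cases hi : α = simpleRoot i
    · rw [hi, lie_F_rootElement_simpleRoot hA hS.toIsChevalleySystem]
      exact neg_mem (zsmul_mem (H_mem_span A E F H ε i) _)
    · rw [lie_F_rootElement hA hS hε hα hi]
      exact rootElement_mem_span hA E F H ε _

theorem span_chevalleyFamily (hA : IsFiniteType A) (hS : IsSerreGenerators K A E F H)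
    (hε : IsAlternating A ε) :
    Submodule.span K (Set.range (chevalleyFamily A E F H ε)) = ⊤ := by
  set N := Submodule.span K (Set.range (chevalleyFamily A E F H ε))
  have hlie (x : L) : ∀ y : L, y ∈ N → ⁅x, y⁆ ∈ N := by
    have hx : x ∈ LieSubalgebra.lieSpan K L (Set.range E ∪ Set.range F) :=
      hS.lieSpan_eq_top ▸ LieSubalgebra.mem_top x
    induction hx using LieSubalgebra.lieSpan_induction with
    | mem x hx =>
      refine fun y hy => (Submodule.span_le.2 ?_ : N ≤ N.comap (ad K L x)) hy
      rintro _ ⟨k, rfl⟩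
      rcases hx with ⟨i, rfl⟩ | ⟨i, rfl⟩
      exacts [lie_E_mem_span hA hS.toIsSerreSystem hε i k,
        lie_F_mem_span hA hS.toIsSerreSystem hε i k]
    | zero => exact fun y _ => (zero_lie (L := L) y).symm ▸ zero_mem N
    | add u v _ _ hu hv => exact fun y hy => add_lie u v y ▸ add_mem (hu y hy) (hv y hy)
    | smul c u _ hu => exact fun y hy => smul_lie c u y ▸ N.smul_mem c (hu y hy)
    | lie u v _ _ hu hv =>
      exact fun y hy => lie_lie u v y ▸ sub_mem (hu _ (hv y hy)) (hv _ (hu y hy))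
  refine eq_top_iff.2 fun x _ => ?_
  have hx : x ∈ LieSubalgebra.lieSpan K L (Set.range E ∪ Set.range F) :=
    hS.lieSpan_eq_top ▸ LieSubalgebra.mem_top x
  induction hx using LieSubalgebra.lieSpan_induction with
  | mem x hx =>
    rcases hx with ⟨i, rfl⟩ | ⟨i, rfl⟩
    exacts [E_mem_span hA E F H ε i, F_mem_span hA E F H ε i]
  | zero => exact zero_mem N
  | add u v _ _ hu hv => exact add_mem (hu trivial) (hv trivial)
  | smul c u _ hu => exact N.smul_mem c (hu trivial)
  | lie u v _ _ _ hv => exact hlie u v (hv trivial)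

theorem lie_H_chevalleyFamily (hA : IsFiniteType A) (hS : IsSerreSystem A E F H)
    (hε : IsAlternating A ε) (i : ι) (k : ι ⊕ {α // IsRoot A α}) :
    ⁅H i, chevalleyFamily A E F H ε k⁆ = (A *ᵥ weight A k) i • chevalleyFamily A E F H ε k := by
  rcases k with j | ⟨α, _⟩
  · rw [weight, Sum.elim_inl, Pi.zero_apply, mulVec_zero, Pi.zero_apply, zero_smul]
    exact hS.lie_H_H i j
  · exact lie_H_rootElement hA hS hε i α

theorem linearIndependent_chevalleyFamily [CharZero K] (hA : IsFiniteType A)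
    (hS : IsSerreGenerators K A E F H) (hε : IsAlternating A ε) :
    LinearIndependent K (chevalleyFamily A E F H ε) := by
  let V (χ : ι → K) : Submodule K L := ⨅ i, (ad K L (H i)).maxGenEigenspace (χ i)
  let χ (α : ι → ℤ) (i : ι) : K := (A *ᵥ α) i
  have hV : iSupIndep V := by
    refine End.independent_iInf_maxGenEigenspace_of_forall_mapsTo _ fun i j =>
      End.mapsTo_maxGenEigenspace_of_comm (LinearMap.ext fun x => ?_)
    change ⁅H j, ⁅H i, x⁆⁆ = ⁅H i, ⁅H j, x⁆⁆
    rw [leibniz_lie, hS.lie_H_H, zero_lie, zero_add]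
  have hmem (k) : chevalleyFamily A E F H ε k ∈ V (χ (weight A k)) := by
    refine (Submodule.mem_iInf _).2 fun i => End.genEigenspace_le_maximal _ _ 1
      (End.mem_eigenspace_iff.2 ?_)
    rw [ad_apply, lie_H_chevalleyFamily hA hS.toIsSerreSystem hε, Int.cast_smul_eq_zsmul]
  have hχ : Function.Injective χ := fun α β h => sub_eq_zero.1 <| hA.eq_zero_of_mulVec_eq_zero <| by
    rw [mulVec_sub, sub_eq_zero]
    exact funext fun i => Int.cast_injective (congr_fun h i)
  have hχ_ne (α : {α // IsRoot A α}) : χ α ≠ χ 0 := hχ.ne α.2.ne_zero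
  refine (linearIndependent_of_lie_E hA hS.toIsChevalleySystem hS.E_ne_zero).sum_type
    ((hV.comp (hχ.comp Subtype.val_injective)).linearIndependent _ (fun α => hmem (Sum.inr α))
      fun α => rootElement_ne_zero hA hS.toIsSerreSystem hε hS.E_ne_zero
        (hS.F_ne_zero hA.diag hS.E_ne_zero) α.2)
    ((hV (χ 0)).mono (Submodule.span_le.2 ?_) (Submodule.span_le.2 ?_))
  · rintro _ ⟨i, rfl⟩
    exact hmem (Sum.inl i)
  · rintro _ ⟨α, rfl⟩
    exact Submodule.mem_iSup_of_mem _ (Submodule.mem_iSup_of_mem (hχ_ne α) (hmem (Sum.inr α)))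

/-- The Chevalley basis. -/
noncomputable def chevalleyBasis [CharZero K] (hA : IsFiniteType A)
    (hS : IsSerreGenerators K A E F H) (hε : IsAlternating A ε) :
    Basis (ι ⊕ {α // IsRoot A α}) K L :=
  Basis.mk (linearIndependent_chevalleyFamily hA hS hε) (span_chevalleyFamily hA hS hε).ge

end Basis

section Diagonal

open Module LieAlgebra

variable {κ K M : Type*} [Field K] [AddCommGroup M] [Module K M] (b : Basis κ K M)
  {f g : End K M} {μ ν : κ → K}

lemma eigenspace_eq_span (hf : ∀ k, f (b k) = μ k • b k) (m : K) :
    f.eigenspace m = Submodule.span K (b '' {k | μ k = m}) := by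
  refine le_antisymm (fun x hx => b.mem_span_image.2 fun k hk => ?_) (Submodule.span_le.2 ?_)
  · have hcoord : b.coord k ∘ₗ f = μ k • b.coord k := b.ext fun l => by
      rcases eq_or_ne l k with rfl | hlk
      · simp only [LinearMap.comp_apply, hf, map_smul, LinearMap.smul_apply]
      · simp only [LinearMap.comp_apply, hf, map_smul, LinearMap.smul_apply, Basis.coord_apply,
          Basis.repr_self, Finsupp.single_eq_of_ne' hlk, smul_zero]
    have hx' := LinearMap.congr_fun hcoord x
    rw [LinearMap.comp_apply, End.mem_eigenspace_iff.1 hx, map_smul, LinearMap.smul_apply] at hx'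
    exact (smul_left_injective K (Finsupp.mem_support_iff.1 hk) hx').symm
  · rintro _ ⟨k, rfl, rfl⟩
    exact End.mem_eigenspace_iff.2 (hf k)

lemma finrank_eigenspace_inf_eigenspace (hf : ∀ k, f (b k) = μ k • b k)
    (hg : ∀ k, g (b k) = ν k • b k) (m n : K) :
    finrank K ↥(f.eigenspace m ⊓ g.eigenspace n) = Nat.card {k // μ k = m ∧ ν k = n} := by
  have hinf : f.eigenspace m ⊓ g.eigenspace n
      = Submodule.span K (Set.range fun k : {k // μ k = m ∧ ν k = n} => b k) := by
    rw [eigenspace_eq_span b hf, eigenspace_eq_span b hg,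
      show (fun k : {k // μ k = m ∧ ν k = n} => b k) = b ∘ Subtype.val from rfl, Set.range_comp,
      Subtype.range_coe_subtype]
    ext x
    simp only [Submodule.mem_inf, b.mem_span_image]
    exact Set.subset_inter_iff.symm
  rw [hinf]
  exact finrank_eq_nat_card_basis
    (Basis.span (b.linearIndependent.comp _ Subtype.val_injective))

lemma iSup_eigenspace_eq_top (hf : ∀ k, f (b k) = μ k • b k) : ⨆ m, f.eigenspace m = ⊤ := by
  rw [eq_top_iff, ← b.span_eq, Submodule.span_le]
  rintro _ ⟨k, rfl⟩
  exact Submodule.mem_iSup_of_mem (μ k) (End.mem_eigenspace_iff.2 (hf k))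

lemma trace_mul_eq_sum [Fintype κ] (hf : ∀ k, f (b k) = μ k • b k)
    (hg : ∀ k, g (b k) = ν k • b k) : LinearMap.trace K M (f ∘ₗ g) = ∑ k, μ k * ν k := by
  classical
  rw [LinearMap.trace_eq_matrix_trace K b]
  refine Finset.sum_congr rfl fun k _ => ?_
  rw [diag_apply, LinearMap.toMatrix_apply, LinearMap.comp_apply, hg, map_smul, hf, map_smul,
    map_smul, Finsupp.smul_apply, Finsupp.smul_apply, Basis.repr_self, Finsupp.single_eq_same,
    smul_eq_mul, smul_eq_mul, mul_one, mul_comm]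

lemma le_of_linearIndependent [Fintype κ] [FiniteDimensional K M] {P S : Submodule K M}
    {v : κ → M} (hv : LinearIndependent K v) (hP : ∀ k, v k ∈ P) (hS : ∀ k, v k ∈ S)
    (hcard : finrank K P ≤ Fintype.card κ) : P ≤ S := by
  have hspan : Submodule.span K (Set.range v) = P :=
    Submodule.eq_of_le_of_finrank_le (Submodule.span_le.2 (Set.range_subset_iff.2 hP))
      ((finrank_span_eq_card hv).symm ▸ hcard)
  exact hspan ▸ Submodule.span_le.2 (Set.range_subset_iff.2 hS)

end Diagonal

section Weights

open Module LieAlgebra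

variable {ι K L : Type*} [Field K] [CharZero K] [LieRing L] [LieAlgebra K L] [IsAddTorsionFree L]
  [Fintype ι] [DecidableEq ι] {A : Matrix ι ι ℤ} {E F H : ι → L} {ε : ι → ℤˣ}

lemma dotProduct_mulVec_simpleRoot (hA : IsFiniteType A) (c : ι → ℤ) (i : ι) :
    c ⬝ᵥ A *ᵥ simpleRoot i = (A *ᵥ c) i := by
  rw [hA.dotProduct_mulVec_comm, single_one_dotProduct]

theorem lie_cartan_chevalleyBasis (hA : IsFiniteType A) (hS : IsSerreGenerators K A E F H)
    (hε : IsAlternating A ε) (c : ι → ℤ) (k : ι ⊕ {α // IsRoot A α}) :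
    LieModule.toEnd K L L (cartan H c) (chevalleyBasis hA hS hε k)
      = ((c ⬝ᵥ A *ᵥ weight A k : ℤ) : K) • chevalleyBasis hA hS hε k := by
  rw [LieModule.toEnd_apply_apply, chevalleyBasis, Basis.mk_apply, cartan, sum_lie,
    Int.cast_smul_eq_zsmul, dotProduct, Finset.sum_smul]
  simp only [smul_lie, lie_H_chevalleyFamily hA hS.toIsSerreSystem hε, smul_smul]

omit [DecidableEq ι] in
theorem killingForm_cartan_self_ne_zero (hA : IsFiniteType A) (hS : IsSerreGenerators K A E F H)
    (hε : IsAlternating A ε) {c : ι → ℤ} (hc : c ≠ 0) :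
    killingForm K L (cartan H c) (cartan H c) ≠ 0 := by
  classical
  have := hA.finite_isRoot
  have := Fintype.ofFinite {α // IsRoot A α}
  have hpos : (0 : ℤ) < ∑ k, (c ⬝ᵥ A *ᵥ weight A k) * (c ⬝ᵥ A *ᵥ weight A k) := by
    obtain ⟨i, hi⟩ := Function.ne_iff.1 (mt hA.eq_zero_of_mulVec_eq_zero hc)
    refine Finset.sum_pos' (fun k _ => mul_self_nonneg _)
      ⟨Sum.inr ⟨simpleRoot i, (hA.isPosRoot_simpleRoot i).1⟩, Finset.mem_univ _, ?_⟩
    rw [weight, Sum.elim_inr, dotProduct_mulVec_simpleRoot hA]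
    exact mul_self_pos.2 hi
  have htrace := trace_mul_eq_sum (chevalleyBasis hA hS hε)
    (lie_cartan_chevalleyBasis hA hS hε c) (lie_cartan_chevalleyBasis hA hS hε c)
  rw [killingForm_apply_apply]
  refine ne_of_eq_of_ne htrace ?_
  exact_mod_cast hpos.ne'

omit [DecidableEq ι] in
lemma cartan_ne_zero (hA : IsFiniteType A) (hS : IsSerreGenerators K A E F H)
    (hε : IsAlternating A ε) {c : ι → ℤ} (hc : c ≠ 0) : cartan H c ≠ 0 := fun h =>
  killingForm_cartan_self_ne_zero hA hS hε hc (by rw [h, map_zero])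

omit [DecidableEq ι] in
lemma iSup_eigenspace_cartan (hA : IsFiniteType A) (hS : IsSerreGenerators K A E F H)
    (hε : IsAlternating A ε) (c : ι → ℤ) :
    ⨆ μ, (LieModule.toEnd K L L (cartan H c)).eigenspace μ = ⊤ := by
  classical
  exact iSup_eigenspace_eq_top (chevalleyBasis hA hS hε) (lie_cartan_chevalleyBasis hA hS hε c)

/-- The number of elements of the Chevalley basis whose weight satisfies `p`, in terms of the set
`R` of the positive roots. -/
def weightCount (R : Finset (ι → ℤ)) (p : (ι → ℤ) → Prop) [DecidablePred p] : ℕ :=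
  (if p 0 then Fintype.card ι else 0) + ∑ α ∈ R, ((if p α then 1 else 0) + if p (-α) then 1 else 0)

omit [DecidableEq ι] in
lemma weightCount_eq_zero {R : Finset (ι → ℤ)} {p : (ι → ℤ) → Prop} [DecidablePred p] (h0 : ¬p 0)
    (hR : ∀ α ∈ R, ¬p α ∧ ¬p (-α)) : weightCount R p = 0 := by
  rw [weightCount, if_neg h0, zero_add]
  exact Finset.sum_eq_zero fun α hα => by rw [if_neg (hR α hα).1, if_neg (hR α hα).2, add_zero]

omit [DecidableEq ι] in
theorem card_weight (hA : IsFiniteType A) {R : Finset (ι → ℤ)} (hR : ∀ α, α ∈ R ↔ IsPosRoot A α)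
    (p : (ι → ℤ) → Prop) [DecidablePred p] :
    Nat.card {k // p (weight A k)} = weightCount R p := by
  have := hA.finite_isRoot
  have hroots : Nat.card {α : {α // IsRoot A α} // p α}
      = (R.filter p).card + (R.filter fun α => p (-α)).card := by
    have hdisj : Disjoint (R.filter p) ((R.filter fun α => p (-α)).image Neg.neg) := by
      refine Finset.disjoint_left.2 fun α hα hα' => ?_
      obtain ⟨β, hβ, rfl⟩ := Finset.mem_image.1 hα'
      exact ((hR _).1 (Finset.mem_filter.1 hβ).1).not_isPosRoot_neg
        ((hR _).1 (Finset.mem_filter.1 hα).1)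
    rw [Nat.card_congr (Equiv.subtypeSubtypeEquivSubtypeInter _ _), ← Finset.card_image_of_injective
      (R.filter fun α => p (-α)) neg_injective, ← Finset.card_union_of_disjoint hdisj]
    refine Nat.subtype_card _ fun α => ?_
    simp only [Finset.mem_union, Finset.mem_filter, Finset.mem_image, hR]
    constructor
    · rintro (⟨h, hp⟩ | ⟨β, ⟨h, hp⟩, rfl⟩)
      exacts [⟨h.1, hp⟩, ⟨h.1.neg, hp⟩]
    · rintro ⟨h, hp⟩
      exact (hA.isPosRoot_or_neg h).imp (⟨·, hp⟩)
        fun h' => ⟨-α, ⟨h', (neg_neg α).symm ▸ hp⟩, neg_neg α⟩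
  rw [Nat.card_congr (Equiv.subtypeSum (p := fun k => p (weight A k))), Nat.card_sum, weightCount,
    Finset.sum_add_distrib, ← Finset.card_filter, ← Finset.card_filter]
  refine congr_arg₂ _ ?_ hroots
  by_cases h : p 0 <;> simp [weight, h]

omit [DecidableEq ι] in
theorem finrank_eigenspace_cartan_inf (hA : IsFiniteType A) (hS : IsSerreGenerators K A E F H)
    (hε : IsAlternating A ε) {R : Finset (ι → ℤ)} (hR : ∀ α, α ∈ R ↔ IsPosRoot A α)
    (c d : ι → ℤ) (m n : ℤ) :
    finrank K ↥((LieModule.toEnd K L L (cartan H c)).eigenspace (m : K)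
        ⊓ (LieModule.toEnd K L L (cartan H d)).eigenspace (n : K))
      = weightCount R fun α => A *ᵥ c ⬝ᵥ α = m ∧ A *ᵥ d ⬝ᵥ α = n := by
  classical
  rw [finrank_eigenspace_inf_eigenspace _ (lie_cartan_chevalleyBasis hA hS hε c)
    (lie_cartan_chevalleyBasis hA hS hε d), ← card_weight hA hR]
  simp only [Int.cast_inj, dotProduct_comm (A *ᵥ _), hA.dotProduct_mulVec_comm _ (weight A _)]

lemma mem_biUnion_rootLayer (hA : IsFiniteType A) {n : ℕ} (hn : rootLayer A n = ∅) (α : ι → ℤ) :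
    α ∈ (Finset.range n).biUnion (rootLayer A) ↔ IsPosRoot A α := by
  simp only [Finset.mem_biUnion, Finset.mem_range, mem_rootLayer hA]
  constructor
  · rintro ⟨k, -, h, -⟩
    exact h
  · intro h
    have hempty (k : ℕ) : rootLayer A (n + k) = ∅ := by
      induction k with
      | zero => exact hn
      | succ k ih =>
        refine Finset.eq_empty_of_forall_notMem fun β hβ => ?_
        obtain ⟨i, γ, hγ, -⟩ := mem_rootLayer_succ.1 hβ
        exact Finset.notMem_empty γ (ih ▸ hγ)
    obtain ⟨k, hk⟩ := Int.eq_ofNat_of_zero_le (Int.sub_nonneg.2 (Int.add_one_le_iff.2 h.height_pos))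
    have hheight : height α = k + 1 := by lia
    refine ⟨k, ?_, h, hheight⟩
    by_contra! hle
    have hmem := (mem_rootLayer hA).2 ⟨h, hheight⟩
    rw [← Nat.add_sub_of_le hle, hempty] at hmem
    exact Finset.notMem_empty α hmem

end Weights

section FiniteDimensional

variable {ι L : Type*} (K : Type*) [Field K] [CharZero K] [LieRing L] [LieAlgebra K L]
  [FiniteDimensional K L] {A : Matrix ι ι ℤ} {E F H : ι → L} {i j : ι} {n : ℕ}

-- `F j` is a primitive vector of weight `-A i j` for the `sl₂`-triple `(E i, H i, F i)`.
lemma IsChevalleySystem.ad_pow_apply_eq_zero (hS : IsChevalleySystem A E F H) (hi : A i i = 2)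
    (hE : E i ≠ 0) (hij : i ≠ j) (hn : A i j = -n) :
    (LieAlgebra.ad K L (F i) ^ (n + 1)) (F j) = 0 := by
  have hE2 : ⁅H i, E i⁆ = 2 • E i := by
    rw [hS.lie_H_E, hi, ofNat_zsmul]
  have hF2 : ⁅H i, F i⁆ = -(2 • F i) := by
    rw [hS.lie_H_F, hi, ofNat_zsmul]
  have hH : H i ≠ 0 := fun h => by
    have := IsAddTorsionFree.of_isTorsionFree K L
    rw [h, zero_lie, eq_comm, smul_eq_zero] at hE2
    exact hE2.elim two_ne_zero hE
  have ht : IsSl2Triple (H i) (E i) (F i) := ⟨hH, hS.lie_E_F_same i, hE2, hF2⟩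
  obtain hF | hF := eq_or_ne (F j) 0
  · rw [hF, map_zero]
  have hprim : ht.HasPrimitiveVectorWith (F j) (n : K) :=
    { ne_zero := hF
      lie_h := by rw [hS.lie_H_F, hn, neg_smul, neg_neg, natCast_zsmul, Nat.cast_smul_eq_nsmul]
      lie_e := hS.lie_E_F_ne i j hij }
  exact hprim.pow_toEnd_f_eq_zero_of_eq_nat rfl

include K

lemma IsChevalleySystem.lie_F_F_of_eq_zero (hS : IsChevalleySystem A E F H) (hi : A i i = 2)
    (hE : E i ≠ 0) (hij : A i j = 0) : ⁅F i, F j⁆ = 0 :=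
  hS.ad_pow_apply_eq_zero K (n := 0) hi hE (by grind) hij

lemma IsChevalleySystem.lie_F_lie_F_F_of_eq_neg_one (hS : IsChevalleySystem A E F H)
    (hi : A i i = 2) (hE : E i ≠ 0) (hij : A i j = -1) :
    ⁅F i, ⁅F i, F j⁆⁆ = 0 :=
  hS.ad_pow_apply_eq_zero K (n := 1) hi hE (by grind) hij

theorem IsChevalleySystem.isSerreSystem (hS : IsChevalleySystem A E F H) (hdiag : ∀ i, A i i = 2)
    (hE : ∀ i, E i ≠ 0) : IsSerreSystem A E F H :=
  haveI := IsAddTorsionFree.of_isTorsionFree K L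
  have hF := hS.F_ne_zero hdiag hE
  { hS with
    lie_E_E := fun i _ => hS.swap.lie_F_F_of_eq_zero K (hdiag i) (hF i)
    lie_E_lie_E_E := fun i _ => hS.swap.lie_F_lie_F_F_of_eq_neg_one K (hdiag i) (hF i)
    lie_F_F := fun i _ => hS.lie_F_F_of_eq_zero K (hdiag i) (hE i)
    lie_F_lie_F_F := fun i _ => hS.lie_F_lie_F_F_of_eq_neg_one K (hdiag i) (hE i) }

end FiniteDimensional

section AdjointModel

variable {ι : Type*} [Fintype ι] {K : Type*} [Field K] {A : Matrix ι ι ℤ}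
  {i j : ι} {α β : ι → ℤ}

variable (K A) in
/-- The underlying space of the adjoint module, with one basis vector for every node of the Dynkin
diagram (spanning the zero weight space) and one for every root. -/
abbrev AdjointModel : Type _ := (ι ⊕ {α : ι → ℤ // IsRoot A α}) →₀ K

namespace AdjointModel

open Classical in
variable (K A) in
/-- The basis vector of weight `α`, or `0` if `α` is not a root. -/
noncomputable def ofRoot (α : ι → ℤ) : AdjointModel K A :=
  if h : IsRoot A α then Finsupp.single (.inr ⟨α, h⟩) 1 else 0

variable (K A) in
/-- The basis vector of weight `0` attached to the node `i`. -/
noncomputable def ofNode (i : ι) : AdjointModel K A := Finsupp.single (.inl i) 1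

variable (K A) in
/-- Translation of weights by `β`, where `β = ± simpleRoot i`. These are the operators by which the
Chevalley generators act in Lusztig's canonical basis of the adjoint module, in which no signs
occur. -/
noncomputable def shift (i : ι) (β : ι → ℤ) : Module.End K (AdjointModel K A) :=
  Finsupp.linearCombination K <| Sum.elim (fun j => |A i j| • ofRoot K A β) fun α =>
    if α.1 = -β then ofNode K A i else ofRoot K A (α.1 + β)

variable (K A) in
/-- The action of the `i`-th coroot on the adjoint module. -/
noncomputable def coroot (i : ι) : Module.End K (AdjointModel K A) :=
  Finsupp.linearCombination K <| Sum.elim 0 fun α => (A *ᵥ α.1) i • ofRoot K A α.1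

lemma ofRoot_of_not_isRoot (h : ¬ IsRoot A α) : ofRoot K A α = 0 := dif_neg h

lemma shift_ofNode (i : ι) (β : ι → ℤ) (j : ι) :
    shift K A i β (ofNode K A j) = |A i j| • ofRoot K A β := by
  simp [shift, ofNode]

lemma shift_ofRoot_neg (h : IsRoot A β) (i : ι) :
    shift K A i β (ofRoot K A (-β)) = ofNode K A i := by
  simp [shift, ofRoot, h.neg]

lemma shift_ofRoot (h : IsRoot A α) (hne : α ≠ -β) (i : ι) :
    shift K A i β (ofRoot K A α) = ofRoot K A (α + β) := by
  simp [shift, ofRoot, h, hne]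

lemma coroot_ofNode (i j : ι) : coroot K A i (ofNode K A j) = 0 := by
  simp [coroot, ofNode]

lemma coroot_ofRoot (i : ι) (α : ι → ℤ) :
    coroot K A i (ofRoot K A α) = (A *ᵥ α) i • ofRoot K A α := by
  by_cases h : IsRoot A α
  · simp [coroot, ofRoot, h]
  · simp [ofRoot_of_not_isRoot h]

lemma hom_ext {f g : Module.End K (AdjointModel K A)}
    (hnode : ∀ j, f (ofNode K A j) = g (ofNode K A j))
    (hroot : ∀ α, IsRoot A α → f (ofRoot K A α) = g (ofRoot K A α)) : f = g := by
  refine Finsupp.lhom_ext' fun b => LinearMap.ext_ring ?_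
  rcases b with j | ⟨α, h⟩
  · exact hnode j
  · have := hroot α h
    rwa [ofRoot, dif_pos h] at this

lemma coroot_mul_coroot (i j : ι) :
    coroot K A i * coroot K A j - coroot K A j * coroot K A i = 0 := by
  refine hom_ext (fun k => ?_) fun α _ => ?_ <;>
    rw [LinearMap.sub_apply, Module.End.mul_apply, Module.End.mul_apply]
  · simp only [coroot_ofNode, map_zero, sub_zero, LinearMap.zero_apply]
  · simp only [coroot_ofRoot, map_zsmul, smul_comm ((A *ᵥ α) i), sub_self, LinearMap.zero_apply]

lemma coroot_mul_shift (hβ : IsRoot A β) (i j : ι) :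
    coroot K A i * shift K A j β - shift K A j β * coroot K A i =
      (A *ᵥ β) i • shift K A j β := by
  refine hom_ext (fun k => ?_) fun α hα => ?_ <;>
    rw [LinearMap.sub_apply, Module.End.mul_apply, Module.End.mul_apply, LinearMap.smul_apply]
  · simp only [coroot_ofNode, shift_ofNode, coroot_ofRoot, map_zsmul, map_zero, sub_zero,
      smul_comm ((A *ᵥ β) i)]
  · obtain rfl | hne := eq_or_ne α (-β)
    · rw [coroot_ofRoot, map_zsmul, shift_ofRoot_neg hβ, coroot_ofNode, mulVec_neg, Pi.neg_apply,
        neg_smul, zero_sub, neg_neg]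
    · simp only [coroot_ofRoot, shift_ofRoot hα hne, map_zsmul, mulVec_add, Pi.add_apply, add_smul,
        add_sub_cancel_left]

lemma shift_neg_ofRoot_self (h : IsRoot A β) (i : ι) :
    shift K A i (-β) (ofRoot K A β) = ofNode K A i := by
  have := shift_ofRoot_neg (K := K) h.neg i
  rwa [neg_neg] at this

lemma shift_neg_shift_ofRoot {p : Prop} [Decidable p] (hα : IsRoot A α) (hne : α ≠ -β)
    (hp : IsRoot A (α + β) ↔ p) (i : ι) :
    shift K A i (-β) (shift K A i β (ofRoot K A α)) = if p then ofRoot K A α else 0 := by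
  rw [shift_ofRoot hα hne]
  split_ifs with h
  · rw [shift_ofRoot (hp.2 h), add_neg_cancel_right]
    rw [neg_neg, Ne, add_eq_right]
    exact hα.ne_zero
  · rw [ofRoot_of_not_isRoot (mt hp.1 h), map_zero]

lemma shift_neg_shift_ofRoot_eq {γ : ι → ℤ} (hβ : IsRoot A β) (hγ : IsRoot A γ) (hne : γ ≠ -β)
    (hij : A i j = 0 ∨ A i j = -1) (hadd : IsRoot A (γ + β) ↔ A i j = -1) :
    shift K A i β (shift K A j (-γ) (ofRoot K A γ)) =
      shift K A j (-γ) (shift K A i β (ofRoot K A γ)) := by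
  rw [shift_neg_ofRoot_self hγ, shift_ofNode, shift_ofRoot hγ hne]
  obtain h | h := hij
  · rw [h, abs_zero, zero_smul, ofRoot_of_not_isRoot (by rw [hadd, h]; decide), map_zero]
  · rw [h, abs_neg, abs_one, one_smul, shift_ofRoot (hadd.2 h), add_neg_cancel_comm]
    rw [neg_neg, Ne, add_eq_left]
    exact hβ.ne_zero

lemma shift_shift_ofRoot {γ : ι → ℤ} (hα : IsRoot A α) (hβ : α ≠ -β) (hγ : α + β ≠ -γ)
    (hadd : IsRoot A (α + β + γ) → IsRoot A (α + β)) (i j : ι) :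
    shift K A j γ (shift K A i β (ofRoot K A α)) = ofRoot K A (α + β + γ) := by
  rw [shift_ofRoot hα hβ]
  by_cases h : IsRoot A (α + β)
  · rw [shift_ofRoot h hγ]
  · rw [ofRoot_of_not_isRoot h, map_zero, ofRoot_of_not_isRoot (mt hadd h)]

variable [DecidableEq ι] (hA : IsFiniteType A)
include hA

lemma shift_mul_shift_neg_same (i : ι) :
    shift K A i (simpleRoot i) * shift K A i (-simpleRoot i) -
      shift K A i (-simpleRoot i) * shift K A i (simpleRoot i) = coroot K A i := by
  have hi := (hA.isPosRoot_simpleRoot i).1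
  refine hom_ext (fun k => ?_) fun α hα => ?_ <;>
    rw [LinearMap.sub_apply, Module.End.mul_apply, Module.End.mul_apply]
  · simp only [shift_ofNode, coroot_ofNode, map_zsmul, shift_ofRoot_neg hi,
      shift_neg_ofRoot_self hi, sub_self]
  have hadd := hA.isRoot_add_simpleRoot_iff (i := i) hα
  have hsub := hA.isRoot_sub_simpleRoot_iff (i := i) hα
  have hself : simpleRoot i ≠ -simpleRoot i := self_ne_neg.2 hi.ne_zero
  rw [sub_eq_add_neg] at hsub
  rw [coroot_ofRoot]
  obtain rfl | hne := eq_or_ne α (simpleRoot i)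
  · rw [mulVec_simpleRoot, hA.diag] at hadd ⊢
    rw [shift_neg_ofRoot_self hi, shift_ofNode, shift_neg_shift_ofRoot hα hself hadd,
      if_neg (by decide), sub_zero, hA.diag]
    rfl
  obtain rfl | hneg := eq_or_ne α (-simpleRoot i)
  · rw [mulVec_neg, Pi.neg_apply, mulVec_simpleRoot, hA.diag] at hsub ⊢
    have := shift_neg_shift_ofRoot (K := K) (β := -simpleRoot i) hα (by rwa [neg_neg]) hsub i
    rw [neg_neg] at this
    rw [this, if_neg (by decide), shift_ofRoot_neg hi, shift_ofNode, zero_sub, neg_smul, hA.diag]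
    rfl
  · have := shift_neg_shift_ofRoot (K := K) (β := -simpleRoot i) hα (by rwa [neg_neg]) hsub i
    rw [neg_neg] at this
    rw [this, shift_neg_shift_ofRoot hα hneg hadd]
    have hle := mt (hA.eq_simpleRoot hα) hne
    have hge := mt (hA.eq_neg_simpleRoot hα) hneg
    obtain h | h | h : (A *ᵥ α) i = -1 ∨ (A *ᵥ α) i = 0 ∨ (A *ᵥ α) i = 1 := by
      grind [hA.le_two hα i, hA.neg_two_le hα i]
    all_goals rw [h]; simp

lemma not_isRoot_simpleRoot_sub (hij : i ≠ j) : ¬ IsRoot A (simpleRoot i - simpleRoot j) := by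
  rw [hA.isRoot_sub_simpleRoot_iff (hA.isPosRoot_simpleRoot i).1, mulVec_simpleRoot]
  grind [hA.isSimplyLaced hij.symm]

lemma isRoot_sub_and_isRoot_add (hij : i ≠ j) (hα : IsRoot A α) (hj : α ≠ simpleRoot j)
    (hi : α ≠ -simpleRoot i) (h : IsRoot A (α - simpleRoot j + simpleRoot i)) :
    IsRoot A (α - simpleRoot j) ∧ IsRoot A (α + simpleRoot i) := by
  have hlt := mt (hA.eq_simpleRoot (i := j) hα) hj
  have hgt := mt (hA.eq_neg_simpleRoot (i := i) hα) hi
  rw [IsRoot, hA.norm_add_simpleRoot, hA.norm_sub_simpleRoot, mulVec_sub_simpleRoot, hα] at h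
  rw [hA.isRoot_sub_simpleRoot_iff hα, hA.isRoot_add_simpleRoot_iff hα]
  grind [hA.le_two hα j, hA.neg_two_le hα i, hA.isSimplyLaced hij]

lemma shift_mul_shift_neg_of_ne (hij : i ≠ j) :
    shift K A i (simpleRoot i) * shift K A j (-simpleRoot j) -
      shift K A j (-simpleRoot j) * shift K A i (simpleRoot i) = 0 := by
  have hri := (hA.isPosRoot_simpleRoot i).1
  have hrj := (hA.isPosRoot_simpleRoot j).1
  have hsymm : simpleRoot i ≠ -simpleRoot j := simpleRoot_ne_neg_simpleRoot i j
  have hdiff := not_isRoot_simpleRoot_sub hA hij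
  have hdiff' := not_isRoot_simpleRoot_sub hA hij.symm
  have hne : simpleRoot i ≠ simpleRoot j := simpleRoot_injective.ne hij
  refine hom_ext (fun k => ?_) fun α hα => ?_ <;>
    rw [LinearMap.sub_apply, Module.End.mul_apply, Module.End.mul_apply, LinearMap.zero_apply,
      sub_eq_zero]
  · rw [shift_ofNode, shift_ofNode, map_zsmul, map_zsmul,
      shift_ofRoot hrj.neg (neg_injective.ne hne.symm), shift_ofRoot hri (by rwa [neg_neg]),
      neg_add_eq_sub, ← sub_eq_add_neg, ofRoot_of_not_isRoot hdiff, smul_zero, smul_zero]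
  obtain rfl | hj := eq_or_ne α (simpleRoot j)
  · refine shift_neg_shift_ofRoot_eq hri hrj (simpleRoot_ne_neg_simpleRoot j i)
      (hA.isSimplyLaced hij) ?_
    rw [hA.isRoot_add_simpleRoot_iff hrj, mulVec_simpleRoot]
  obtain rfl | hi := eq_or_ne α (-simpleRoot i)
  · have hadd : IsRoot A (-simpleRoot i + -simpleRoot j) ↔ A j i = -1 := by
      rw [← mulVec_simpleRoot A, ← hA.isRoot_add_simpleRoot_iff hri, ← neg_add]
      exact ⟨fun h => neg_neg (simpleRoot i + simpleRoot j) ▸ h.neg, IsRoot.neg⟩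
    have := shift_neg_shift_ofRoot_eq (K := K) hrj.neg hri.neg (neg_injective.ne hsymm)
      (hA.isSimplyLaced hij.symm) hadd
    rw [neg_neg] at this
    exact this.symm
  have hroots := isRoot_sub_and_isRoot_add hA hij hα hj hi
  rw [sub_eq_add_neg] at hroots
  rw [shift_shift_ofRoot hα (by rwa [neg_neg]) (fun h => hdiff' ?_) fun h => (hroots h).1,
    shift_shift_ofRoot hα hi (fun h => hdiff' ?_) fun h => (hroots (add_right_comm α _ _ ▸ h)).2,
    add_right_comm]
  · rwa [← eq_sub_iff_add_eq.2 (h.trans (neg_neg _))]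
  · rwa [sub_eq_neg_add, ← add_neg_eq_iff_eq_add.1 h]

attribute [local instance 100] LieRing.ofAssociativeRing

theorem isChevalleySystem :
    IsChevalleySystem A (fun i => shift K A i (simpleRoot i)) (fun i => shift K A i (-simpleRoot i))
      (coroot K A) where
  lie_H_H := coroot_mul_coroot
  lie_E_F_same := shift_mul_shift_neg_same hA
  lie_E_F_ne _ _ := shift_mul_shift_neg_of_ne hA
  lie_H_E i j := by
    rw [← mulVec_simpleRoot A]
    exact coroot_mul_shift (hA.isPosRoot_simpleRoot j).1 i j
  lie_H_F i j := by
    rw [← mulVec_simpleRoot A, ← neg_smul, ← Pi.neg_apply (A *ᵥ _), ← mulVec_neg]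
    exact coroot_mul_shift (hA.isPosRoot_simpleRoot j).1.neg i j

lemma shift_simpleRoot_ne_zero (i : ι) : shift K A i (simpleRoot i) ≠ 0 := fun h => by
  have := DFunLike.congr_fun h (ofRoot K A (-simpleRoot i))
  rw [shift_ofRoot_neg (hA.isPosRoot_simpleRoot i).1, LinearMap.zero_apply, ofNode] at this
  exact one_ne_zero (Finsupp.single_eq_zero.1 this)

theorem isSerreSystem [CharZero K] :
    IsSerreSystem A (fun i => shift K A i (simpleRoot i)) (fun i => shift K A i (-simpleRoot i))
      (coroot K A) :=
  haveI := hA.finite_isRoot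
  (isChevalleySystem hA).isSerreSystem K hA.diag (shift_simpleRoot_ne_zero hA)

end AdjointModel
end AdjointModel

section ToLieAlgebra

open CartanMatrix

lemma map_ad_pow_apply {R L L' : Type*} [CommRing R] [LieRing L] [LieAlgebra R L] [LieRing L']
    [LieAlgebra R L'] (φ : L →ₗ⁅R⁆ L') (x y : L) (n : ℕ) :
    φ ((LieAlgebra.ad R L x ^ n) y) = (LieAlgebra.ad R L' (φ x) ^ n) (φ y) := by
  induction n with
  | zero => rfl
  | succ n ih =>
    rw [pow_succ', pow_succ', Module.End.mul_apply, Module.End.mul_apply, LieAlgebra.ad_apply,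
      LieAlgebra.ad_apply, LieHom.map_lie, ih]

variable {ι : Type*} [DecidableEq ι] {K : Type*} [CommRing K] {A : Matrix ι ι ℤ}

variable (K A) in
/-- The quotient map from the free Lie algebra on the Chevalley generators onto the Lie algebra
defined by the Serre relations. -/
noncomputable def serreQuotient : FreeLieAlgebra K (Generators ι) →ₗ⁅K⁆ A.ToLieAlgebra K :=
  { (LieSubmodule.Quotient.mk' (Relations.toIdeal K A)).toLinearMap with
    map_lie' := fun {x y} => LieSubmodule.Quotient.mk_bracket (Relations.toIdeal K A) x y }

lemma serreQuotient_surjective : Function.Surjective (serreQuotient K A) :=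
  LieSubmodule.Quotient.surjective_mk' (Relations.toIdeal K A)

lemma serreQuotient_eq_zero_iff {x : FreeLieAlgebra K (Generators ι)} :
    serreQuotient K A x = 0 ↔ x ∈ Relations.toIdeal K A :=
  LieSubmodule.Quotient.mk_eq_zero (Relations.toIdeal K A)

lemma serreQuotient_eq_zero {x : FreeLieAlgebra K (Generators ι)} (h : x ∈ Relations.toSet K A) :
    serreQuotient K A x = 0 :=
  serreQuotient_eq_zero_iff.2 (LieSubmodule.subset_lieSpan h)

variable (K A) in
/-- The Chevalley generator `Eᵢ` of the Lie algebra of a Cartan matrix. -/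
noncomputable def genE (i : ι) : A.ToLieAlgebra K := serreQuotient K A (.of K (.E i))

variable (K A) in
/-- The Chevalley generator `Fᵢ` of the Lie algebra of a Cartan matrix. -/
noncomputable def genF (i : ι) : A.ToLieAlgebra K := serreQuotient K A (.of K (.F i))

variable (K A) in
/-- The Chevalley generator `Hᵢ` of the Lie algebra of a Cartan matrix. -/
noncomputable def genH (i : ι) : A.ToLieAlgebra K := serreQuotient K A (.of K (.H i))

lemma isChevalleySystem_gen : IsChevalleySystem A (genE K A) (genF K A) (genH K A) where
  lie_H_H i j := by
    rw [genH, genH, ← LieHom.map_lie]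
    exact serreQuotient_eq_zero (.inl (.inl (.inl (.inl (.inl ⟨(i, j), rfl⟩)))))
  lie_E_F_same i := by
    rw [genE, genF, genH, ← LieHom.map_lie, ← sub_eq_zero, ← map_sub]
    exact serreQuotient_eq_zero (.inl (.inl (.inl (.inl (.inr ⟨(i, i), if_pos rfl⟩)))))
  lie_E_F_ne i j hij := by
    rw [genE, genF, ← LieHom.map_lie]
    exact serreQuotient_eq_zero (.inl (.inl (.inl (.inl (.inr ⟨(i, j), if_neg hij⟩)))))
  lie_H_E i j := by
    rw [genH, genE, ← LieHom.map_lie, ← sub_eq_zero, ← map_zsmul, ← map_sub]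
    exact serreQuotient_eq_zero (.inl (.inl (.inl (.inr ⟨(i, j), rfl⟩))))
  lie_H_F i j := by
    rw [genH, genF, ← LieHom.map_lie, ← sub_eq_zero, ← map_zsmul, sub_neg_eq_add, ← map_add]
    exact serreQuotient_eq_zero (.inl (.inl (.inr ⟨(i, j), rfl⟩)))

lemma ad_genE_pow_apply (i j : ι) :
    (LieAlgebra.ad K (A.ToLieAlgebra K) (genE K A i) ^ (-A i j).toNat) ⁅genE K A i, genE K A j⁆ =
      0 := by
  rw [genE, genE, ← LieHom.map_lie, ← map_ad_pow_apply]
  exact serreQuotient_eq_zero (.inl (.inr ⟨(i, j), rfl⟩))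

lemma ad_genF_pow_apply (i j : ι) :
    (LieAlgebra.ad K (A.ToLieAlgebra K) (genF K A i) ^ (-A i j).toNat) ⁅genF K A i, genF K A j⁆ =
      0 := by
  rw [genF, genF, ← LieHom.map_lie, ← map_ad_pow_apply]
  exact serreQuotient_eq_zero (.inr ⟨(i, j), rfl⟩)

theorem isSerreSystem_gen : IsSerreSystem A (genE K A) (genF K A) (genH K A) :=
  { isChevalleySystem_gen with
    lie_E_E := fun i j h => by
      have := ad_genE_pow_apply (K := K) (A := A) i j
      rwa [h] at this
    lie_E_lie_E_E := fun i j h => by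
      have := ad_genE_pow_apply (K := K) (A := A) i j
      rwa [h] at this
    lie_F_F := fun i j h => by
      have := ad_genF_pow_apply (K := K) (A := A) i j
      rwa [h] at this
    lie_F_lie_F_F := fun i j h => by
      have := ad_genF_pow_apply (K := K) (A := A) i j
      rwa [h] at this }

theorem lieSpan_gen :
    LieSubalgebra.lieSpan K (A.ToLieAlgebra K) (Set.range (genE K A) ∪ Set.range (genF K A)) =
      ⊤ := by
  set N := LieSubalgebra.lieSpan K (A.ToLieAlgebra K) (Set.range (genE K A) ∪ Set.range (genF K A))
  have hE (i : ι) : genE K A i ∈ N := LieSubalgebra.subset_lieSpan (.inl ⟨i, rfl⟩)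
  have hF (i : ι) : genF K A i ∈ N := LieSubalgebra.subset_lieSpan (.inr ⟨i, rfl⟩)
  have hH (i : ι) : genH K A i ∈ N := by
    rw [← isChevalleySystem_gen.lie_E_F_same i]
    exact N.lie_mem (hE i) (hF i)
  let φ : FreeLieAlgebra K (Generators ι) →ₗ⁅K⁆ N := FreeLieAlgebra.lift K fun
    | .E i => ⟨genE K A i, hE i⟩
    | .F i => ⟨genF K A i, hF i⟩
    | .H i => ⟨genH K A i, hH i⟩
  have hφ : N.incl.comp φ = serreQuotient K A := by
    refine FreeLieAlgebra.hom_ext fun g => ?_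
    rw [LieHom.comp_apply, FreeLieAlgebra.lift_of_apply]
    cases g <;> rfl
  refine eq_top_iff.2 fun x _ => ?_
  obtain ⟨y, rfl⟩ := serreQuotient_surjective x
  rw [← hφ]
  exact (φ y).2

variable {L : Type*} [LieRing L] [LieAlgebra K L] {E F H : ι → L}

omit [DecidableEq ι] in
variable (K) in
lemma IsSerreSystem.ad_E_pow_apply (hA : A.IsSimplyLaced) (hS : IsSerreSystem A E F H) (i j : ι) :
    (LieAlgebra.ad K L (E i) ^ (-A i j).toNat) ⁅E i, E j⁆ = 0 := by
  obtain rfl | hij := eq_or_ne i j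
  · rw [lie_self, map_zero]
  obtain h | h := hA hij
  · rw [hS.lie_E_E i j h, map_zero]
  · rw [h]
    exact hS.lie_E_lie_E_E i j h

theorem IsSerreSystem.toIdeal_le_ker {φ : FreeLieAlgebra K (Generators ι) →ₗ⁅K⁆ L}
    (hA : A.IsSimplyLaced) (hS : IsSerreSystem A (fun i => φ (.of K (.E i)))
      (fun i => φ (.of K (.F i))) fun i => φ (.of K (.H i))) : Relations.toIdeal K A ≤ φ.ker := by
  refine LieSubmodule.lieSpan_le.2 fun x hx => ?_
  rw [SetLike.mem_coe, LieHom.mem_ker]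
  obtain (((((⟨⟨i, j⟩, rfl⟩ | ⟨⟨i, j⟩, rfl⟩) | ⟨⟨i, j⟩, rfl⟩) | ⟨⟨i, j⟩, rfl⟩) | ⟨⟨i, j⟩, rfl⟩) |
    ⟨⟨i, j⟩, rfl⟩) := hx
  · exact (φ.map_lie _ _).trans (hS.lie_H_H i j)
  · rw [Relations.EF, Function.uncurry_apply_pair]
    split_ifs with h
    · exact (map_sub φ _ _).trans (sub_eq_zero.2 ((φ.map_lie _ _).trans (hS.lie_E_F_same i)))
    · exact (φ.map_lie _ _).trans (hS.lie_E_F_ne i j h)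
  · rw [Relations.HE, Function.uncurry_apply_pair, map_sub, map_zsmul, LieHom.map_lie, sub_eq_zero]
    exact hS.lie_H_E i j
  · rw [Relations.HF, Function.uncurry_apply_pair, map_add, map_zsmul, LieHom.map_lie,
      add_eq_zero_iff_eq_neg]
    exact hS.lie_H_F i j
  · rw [Relations.adE, Function.uncurry_apply_pair, map_ad_pow_apply, LieHom.map_lie]
    exact hS.ad_E_pow_apply K hA i j
  · rw [Relations.adF, Function.uncurry_apply_pair, map_ad_pow_apply, LieHom.map_lie]
    exact hS.swap.ad_E_pow_apply K hA i j

lemma IsSerreSystem.genE_ne_zero (hA : A.IsSimplyLaced) (hS : IsSerreSystem A E F H) {i : ι}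
    (hE : E i ≠ 0) : genE K A i ≠ 0 := by
  let φ : FreeLieAlgebra K (Generators ι) →ₗ⁅K⁆ L := FreeLieAlgebra.lift K fun
    | .E i => E i
    | .F i => F i
    | .H i => H i
  have hker : Relations.toIdeal K A ≤ φ.ker := by
    refine IsSerreSystem.toIdeal_le_ker hA ?_
    simpa only [φ, FreeLieAlgebra.lift_of_apply] using hS
  intro h
  have := hker (serreQuotient_eq_zero_iff.1 h)
  rw [LieHom.mem_ker, FreeLieAlgebra.lift_of_apply] at this
  exact hE this

end ToLieAlgebra

section Generators

open CartanMatrix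

attribute [local instance 100] LieRing.ofAssociativeRing

theorem isSerreGenerators_gen {ι K : Type*} [Finite ι] [DecidableEq ι] [Field K] [CharZero K]
    {A : Matrix ι ι ℤ} (hA : IsFiniteType A) :
    IsSerreGenerators K A (genE K A) (genF K A) (genH K A) := by
  have := Fintype.ofFinite ι
  exact { isSerreSystem_gen with
    E_ne_zero := fun i => (AdjointModel.isSerreSystem (K := K) hA).genE_ne_zero hA.isSimplyLaced
      (AdjointModel.shift_simpleRoot_ne_zero hA i)
    lieSpan_eq_top := lieSpan_gen }

end Generators

section E₈

open CartanMatrix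

-- Gaussian elimination from the leaves of the Dynkin diagram towards the trivalent node.
lemma sixty_mul_norm_E₈ (x : Fin 8 → ℤ) :
    60 * (x ⬝ᵥ E₈ *ᵥ x) = 30 * (2 * x 0 - x 2) ^ 2 + 30 * (2 * x 1 - x 3) ^ 2 +
      30 * (2 * x 7 - x 6) ^ 2 + 10 * (3 * x 2 - 2 * x 3) ^ 2 + 10 * (3 * x 6 - 2 * x 5) ^ 2 +
      5 * (4 * x 5 - 3 * x 4) ^ 2 + 3 * (5 * x 4 - 4 * x 3) ^ 2 + 2 * x 3 ^ 2 := by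
  simp only [E₈, dotProduct, mulVec, Fin.sum_univ_eight, of_apply, cons_val]
  ring

theorem isFiniteType_E₈ : IsFiniteType E₈ where
  posDef := .of_dotProduct_mulVec_pos E₈_isSymm fun x hx => by
    rw [star_trivial]
    by_contra! h
    have hsq := sixty_mul_norm_E₈ x
    have hzero : 2 * x 0 - x 2 = 0 ∧ 2 * x 1 - x 3 = 0 ∧ 2 * x 7 - x 6 = 0 ∧
        3 * x 2 - 2 * x 3 = 0 ∧ 3 * x 6 - 2 * x 5 = 0 ∧ 4 * x 5 - 3 * x 4 = 0 ∧
        5 * x 4 - 4 * x 3 = 0 ∧ x 3 = 0 := by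
      refine ⟨?_, ?_, ?_, ?_, ?_, ?_, ?_, ?_⟩ <;> refine sq_nonpos_iff _ |>.1 ?_ <;>
        linarith [sq_nonneg (2 * x 0 - x 2), sq_nonneg (2 * x 1 - x 3), sq_nonneg (2 * x 7 - x 6),
          sq_nonneg (3 * x 2 - 2 * x 3), sq_nonneg (3 * x 6 - 2 * x 5),
          sq_nonneg (4 * x 5 - 3 * x 4), sq_nonneg (5 * x 4 - 4 * x 3), sq_nonneg (x 3)]
    refine hx (funext fun i => ?_)
    fin_cases i <;> dsimp <;> lia
  diag := E₈_diag
  isSimplyLaced := CartanMatrix.isSimplyLaced_E₈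

/-- The signs of the bipartite colouring of the Dynkin diagram. -/
def signE₈ : Fin 8 → ℤˣ := ![1, -1, -1, 1, -1, 1, -1, 1]

lemma isAlternating_signE₈ : IsAlternating E₈ signE₈ := by
  intro i
  fin_cases i <;> decide

/-- The positive roots, listed by height; the highest root has height 29. -/
def posRootsE₈ : Finset (Fin 8 → ℤ) := (Finset.range 29).biUnion (rootLayer E₈)

lemma mem_posRootsE₈ (α : Fin 8 → ℤ) : α ∈ posRootsE₈ ↔ IsPosRoot E₈ α := by
  refine mem_biUnion_rootLayer isFiniteType_E₈ (Finset.card_eq_zero.1 ?_) α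
  decide +kernel

/-- The simple coroot coordinates of the neutral element `h = h₁ + h₂` of the nilpotent orbit
`A₃ + A₁`, the Levi subsystem having the simple roots `0, 2, 3` and `5`. -/
def neutralCoeff : Fin 8 → ℤ := ![3, 0, 4, 3, 0, 1, 0, 0]

/-- The simple coroot coordinates of the neutral element `h₁` of the component `A₃`. -/
def neutralCoeffA₃ : Fin 8 → ℤ := ![3, 0, 4, 3, 0, 0, 0, 0]

/-- The simple coroot coordinates of an element of the Cartan subalgebra that is orthogonal to the
simple roots `0, 2, 3, 5` and takes the value 1 on the other ones. -/
def leviCoeff : Fin 8 → ℤ := ![19, 29, 38, 57, 47, 36, 25, 13]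

lemma mulVec_neutralCoeff : E₈ *ᵥ neutralCoeff = ![2, -3, 2, 2, -4, 2, -1, 0] := by
  decide

lemma mulVec_neutralCoeffA₃ : E₈ *ᵥ neutralCoeffA₃ = ![2, -3, 2, 2, -3, 0, 0, 0] := by
  decide

lemma mulVec_leviCoeff : E₈ *ᵥ leviCoeff = ![0, 1, 0, 0, 1, 0, 1, 1] := by
  decide

lemma weightCount_neutral (n : Fin 4) :
    weightCount posRootsE₈ (fun α => ![2, -3, 2, 2, -4, 2, -1, 0] ⬝ᵥ α = (n : ℤ))
      = ![50, 34, 26, 20] n := by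
  revert n
  decide +kernel

lemma weightCount_neutralA₃_neutralA₁ (m : Fin 2) (n : Fin 4) :
    weightCount posRootsE₈ (fun α => ![2, -3, 2, 2, -3, 0, 0, 0] ⬝ᵥ α = 2 * (m : ℤ)
        ∧ ![0, 0, 0, 0, -1, 2, -1, 0] ⬝ᵥ α = (n : ℤ))
      = ![![34, 16, 1, 0], ![9, 2, 0, 0]] m n := by
  revert m n
  decide +kernel

lemma weightCount_levi_neutral (n : Fin 5) :
    weightCount posRootsE₈ (fun α => ![0, 1, 0, 0, 1, 0, 1, 1] ⬝ᵥ α = 0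
        ∧ ![2, -3, 2, 2, -4, 2, -1, 0] ⬝ᵥ α = 2 * (n : ℤ))
      = ![8, 4, 2, 1, 0] n := by
  revert n
  decide +kernel

lemma neutral_of_levi_eq_zero : ∀ α ∈ posRootsE₈, ![0, 1, 0, 0, 1, 0, 1, 1] ⬝ᵥ α = 0 →
    ![2, -3, 2, 2, -4, 2, -1, 0] ⬝ᵥ α ∈ ({2, 4, 6} : Finset ℤ) := by
  decide +kernel

end E₈

section Reachability

open Module LieModule PaperStmt

variable {K L : Type*} [Field K] [LieRing L] [LieAlgebra K L] {e f h t x y z : L}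

lemma mem_centralizerOf : x ∈ (centralizerOf K e).toSubmodule ↔ ⁅e, x⁆ = 0 := by
  rw [← lie_skew, neg_eq_zero]
  rfl

lemma centralizerOf_eq_ker :
    (centralizerOf K e).toSubmodule = LinearMap.ker (toEnd K L L e) :=
  SetLike.ext fun _ => mem_centralizerOf

lemma lie_mem_derivedOf (hx : ⁅e, x⁆ = 0) (hy : ⁅e, y⁆ = 0) :
    ⁅x, y⁆ ∈ derivedOf K (centralizerOf K e) :=
  Submodule.subset_span ⟨x, mem_centralizerOf.2 hx, y, mem_centralizerOf.2 hy, rfl⟩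

lemma derivedOf_le_centralizerOf :
    derivedOf K (centralizerOf K e) ≤ (centralizerOf K e).toSubmodule := by
  refine Submodule.span_le.2 ?_
  rintro _ ⟨x, hx, y, hy, rfl⟩
  exact (centralizerOf K e).lie_mem hx hy

theorem finrank_derivedOf_add_one [FiniteDimensional K L]
    (hle : (centralizerOf K e).toSubmodule ≤
      Submodule.span K {e} ⊔ derivedOf K (centralizerOf K e))
    (he : e ∉ derivedOf K (centralizerOf K e)) :
    finrank K (centralizerOf K e).toSubmodule = finrank K (derivedOf K (centralizerOf K e)) + 1 ∧
      (centralizerOf K e).toSubmodule = Submodule.span K {e} ⊔ derivedOf K (centralizerOf K e) ∧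
      Submodule.span K {e} ⊓ derivedOf K (centralizerOf K e) = ⊥ := by
  have hsup : (centralizerOf K e).toSubmodule =
      Submodule.span K {e} ⊔ derivedOf K (centralizerOf K e) :=
    hle.antisymm (sup_le ((Submodule.span_singleton_le_iff_mem _ _).2
      (mem_centralizerOf.2 (lie_self e))) derivedOf_le_centralizerOf)
  exact ⟨by rw [hsup, sup_comm, Submodule.finrank_sup_span_singleton he], hsup,
    (Submodule.disjoint_span_singleton_of_notMem he).symm.eq_bot⟩

lemma lie_e_lie_h_eq_zero (T : IsSl2Triple h e f) (hx : ⁅e, x⁆ = 0) : ⁅e, ⁅h, x⁆⁆ = 0 := by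
  rw [leibniz_lie, hx, lie_zero, add_zero, ← lie_skew e h, T.lie_h_e_nsmul, neg_lie, nsmul_lie, hx,
    smul_zero, neg_zero]

variable [CharZero K]

-- A vector of nonzero `t`-weight `μ` is the bracket of `μ⁻¹ • t` with itself.
theorem centralizerOf_le [FiniteDimensional K L] (T : IsSl2Triple h e f)
    (het : ⁅e, t⁆ = 0) (hht : ⁅h, t⁆ = 0)
    (hdiag : ∀ s ∈ ({h, t} : Set L), ⨆ μ, (toEnd K L L s).eigenspace μ = ⊤)
    {S : Submodule K L} (hS : derivedOf K (centralizerOf K e) ≤ S)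
    (h0 : ∀ n : ℕ, (toEnd K L L t).eigenspace 0 ⊓ (toEnd K L L h).eigenspace (n : K) ⊓
      LinearMap.ker (toEnd K L L e) ≤ S) :
    (centralizerOf K e).toSubmodule ≤ S := by
  have hZt : ∀ x ∈ (centralizerOf K e).toSubmodule, ⁅t, x⁆ ∈ (centralizerOf K e).toSubmodule :=
    fun x hx => (centralizerOf K e).lie_mem (mem_centralizerOf.2 het) hx
  rw [eq_iSup_inf_eigenspace hZt (hdiag t (by simp))]
  refine iSup_le fun μ x ⟨hxe, hxt⟩ => ?_
  rw [SetLike.mem_coe, End.mem_eigenspace_iff, toEnd_apply_apply] at hxt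
  rcases eq_or_ne μ 0 with rfl | hμ
  · set N := (toEnd K L L t).eigenspace 0 ⊓ (centralizerOf K e).toSubmodule
    have hNe : ∀ x ∈ N, ⁅e, x⁆ = 0 := fun x hx => mem_centralizerOf.1 hx.2
    have hNh : ∀ x ∈ N, ⁅h, x⁆ ∈ N := fun x ⟨hxt, hxe⟩ => by
      rw [SetLike.mem_coe, End.mem_eigenspace_iff, toEnd_apply_apply, zero_smul] at hxt
      refine ⟨End.mem_eigenspace_iff.2 ?_,
        mem_centralizerOf.2 (lie_e_lie_h_eq_zero T (mem_centralizerOf.1 hxe))⟩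
      rw [toEnd_apply_apply, leibniz_lie, hxt, ← lie_skew t h, hht, neg_zero, zero_lie, lie_zero,
        add_zero, zero_smul]
    have hxN : x ∈ N := ⟨End.mem_eigenspace_iff.2 hxt, hxe⟩
    rw [eq_iSup_inf_eigenspace_natCast T hNe hNh (hdiag h (by simp))] at hxN
    refine (iSup_le fun n => ?_ : _ ≤ S) hxN
    rw [inf_right_comm, centralizerOf_eq_ker]
    exact h0 n
  · rw [← inv_smul_smul₀ hμ x, ← hxt]
    exact S.smul_mem _ (hS (lie_mem_derivedOf het (mem_centralizerOf.1 hxe)))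

omit [CharZero K] in
lemma killingForm_eq_zero_of_add_ne_zero {m n : K} (hx : ⁅h, x⁆ = m • x) (hy : ⁅h, y⁆ = n • y)
    (hmn : m + n ≠ 0) : killingForm K L x y = 0 := by
  have hinv := traceForm_apply_lie_apply' K L L h x y
  rw [hx, hy, map_smul, map_smul, LinearMap.smul_apply, smul_eq_mul, smul_eq_mul,
    eq_neg_iff_add_eq_zero, ← add_mul] at hinv
  exact (mul_eq_zero.1 hinv).resolve_left hmn

-- Elements of `g_e` whose weights do not add up to 2 have a bracket orthogonal to `f'`; otherwise
-- one of the weights is 0 or 1, and invariance moves `f'` onto that element.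
lemma killingForm_lie_eq_zero {f' : L} (hhf : ⁅h, f'⁆ = (-2 : K) • f')
    (hf : ∀ (x : L) (n : ℕ), n < 2 → ⁅e, x⁆ = 0 → ⁅h, x⁆ = (n : K) • x → ⁅f', x⁆ = 0)
    {m n : ℕ} (hex : ⁅e, x⁆ = 0) (hey : ⁅e, y⁆ = 0) (hx : ⁅h, x⁆ = (m : K) • x)
    (hy : ⁅h, y⁆ = (n : K) • y) : killingForm K L ⁅x, y⁆ f' = 0 := by
  have hlow {x : L} (y : L) {n : ℕ} (hn : n < 2) (hex : ⁅e, x⁆ = 0) (hx : ⁅h, x⁆ = (n : K) • x) :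
      killingForm K L ⁅x, y⁆ f' = 0 := by
    rw [killingForm, traceForm_comm, ← traceForm_apply_lie_apply, hf x n hn hex hx, map_zero,
      LinearMap.zero_apply]
  by_cases hmn : m + n = 2
  · rcases lt_or_ge m 2 with hm | hm
    · exact hlow y hm hex hx
    · rw [← lie_skew, map_neg, LinearMap.neg_apply, hlow x (by lia : n < 2) hey hy, neg_zero]
  · have hlie : ⁅h, ⁅x, y⁆⁆ = ((m + n : ℕ) : K) • ⁅x, y⁆ := by
      rw [leibniz_lie, hx, hy, smul_lie, lie_smul, ← add_smul, Nat.cast_add]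
    refine killingForm_eq_zero_of_add_ne_zero hlie hhf fun h0 => hmn ?_
    rw [← sub_eq_add_neg, sub_eq_zero] at h0
    exact_mod_cast h0

theorem killingForm_eq_zero_of_mem_derivedOf [FiniteDimensional K L] (T : IsSl2Triple h e f)
    (hdiag : ⨆ μ, (toEnd K L L h).eigenspace μ = ⊤) {f' : L} (hhf : ⁅h, f'⁆ = (-2 : K) • f')
    (hf : ∀ (x : L) (n : ℕ), n < 2 → ⁅e, x⁆ = 0 → ⁅h, x⁆ = (n : K) • x → ⁅f', x⁆ = 0)
    (hz : z ∈ derivedOf K (centralizerOf K e)) : killingForm K L z f' = 0 := by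
  have hZ := eq_iSup_inf_eigenspace_natCast (N := (centralizerOf K e).toSubmodule) T
    (fun x hx => mem_centralizerOf.1 hx)
    (fun x hx => mem_centralizerOf.2 (lie_e_lie_h_eq_zero T (mem_centralizerOf.1 hx))) hdiag
  suffices h0 : ∀ x ∈ (centralizerOf K e).toSubmodule, ∀ y ∈ (centralizerOf K e).toSubmodule,
      killingForm K L ⁅x, y⁆ f' = 0 by
    refine (Submodule.span_le.2 ?_ : _ ≤ LinearMap.ker ((killingForm K L).flip f')) hz
    rintro _ ⟨x, hx, y, hy, rfl⟩
    exact h0 x hx y hy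
  rw [hZ]
  intro x hx y hy
  induction hx using Submodule.iSup_induction' with
  | mem m x hx =>
    induction hy using Submodule.iSup_induction' with
    | mem n y hy =>
      exact killingForm_lie_eq_zero hhf hf (mem_centralizerOf.1 hx.1) (mem_centralizerOf.1 hy.1)
        (End.mem_eigenspace_iff.1 hx.2) (End.mem_eigenspace_iff.1 hy.2)
    | zero => rw [lie_zero, map_zero, LinearMap.zero_apply]
    | add y₁ y₂ _ _ h₁ h₂ => rw [lie_add, map_add, LinearMap.add_apply, h₁, h₂, add_zero]
  | zero => rw [zero_lie, map_zero, LinearMap.zero_apply]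
  | add x₁ x₂ _ _ h₁ h₂ => rw [add_lie, map_add, LinearMap.add_apply, h₁, h₂, add_zero]

end Reachability

section CommutingTriples

open Module LieModule PaperStmt

variable {K L M : Type*} [Field K] [LieRing L] [LieAlgebra K L] [AddCommGroup M]
  [Module K M] [LieRingModule L M] [LieModule K L M] {h₁ e₁ f₁ h₂ e₂ f₂ x y : L}

lemma lie_mem_eigenspace_of_lie_eq_zero (hxy : ⁅x, y⁆ = 0) {μ : K} {m : M}
    (hm : m ∈ (toEnd K L M x).eigenspace μ) : ⁅y, m⁆ ∈ (toEnd K L M x).eigenspace μ := by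
  rw [End.mem_eigenspace_iff, toEnd_apply_apply] at hm ⊢
  rw [leibniz_lie, hxy, zero_lie, zero_add, hm, lie_smul]

lemma lie_h_eq_zero_of_lie_e_of_lie_f (t : IsSl2Triple h₂ e₂ f₂) (he : ⁅x, e₂⁆ = 0)
    (hf : ⁅x, f₂⁆ = 0) : ⁅x, h₂⁆ = 0 := by
  rw [← t.lie_e_f, leibniz_lie, he, hf, zero_lie, lie_zero, add_zero]

theorem finrank_highestWeight_of_commuting [CharZero K] [FiniteDimensional K M]
    (t₁ : IsSl2Triple h₁ e₁ f₁) (t₂ : IsSl2Triple h₂ e₂ f₂)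
    (hcomm : ∀ x ∈ ({e₁, f₁} : Set L), ⁅x, e₂⁆ = 0 ∧ ⁅x, f₂⁆ = 0) (m n : ℕ) :
    finrank K ↥((toEnd K L M h₁).eigenspace (m : K) ⊓ LinearMap.ker (toEnd K L M e₁) ⊓
          (toEnd K L M h₂).eigenspace (n : K) ⊓ LinearMap.ker (toEnd K L M e₂))
        + finrank K ↥((toEnd K L M h₁).eigenspace (m : K) ⊓
          (toEnd K L M h₂).eigenspace ((n + 2 : ℕ) : K))
        + finrank K ↥((toEnd K L M h₁).eigenspace ((m + 2 : ℕ) : K) ⊓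
          (toEnd K L M h₂).eigenspace (n : K))
      = finrank K ↥((toEnd K L M h₁).eigenspace (m : K) ⊓ (toEnd K L M h₂).eigenspace (n : K))
        + finrank K ↥((toEnd K L M h₁).eigenspace ((m + 2 : ℕ) : K) ⊓
          (toEnd K L M h₂).eigenspace ((n + 2 : ℕ) : K)) := by
  have he₁ := hcomm e₁ (by simp)
  have hf₁ := hcomm f₁ (by simp)
  have hlie_h₂ {x : L} (hx : ⁅x, e₂⁆ = 0 ∧ ⁅x, f₂⁆ = 0) : ⁅h₂, x⁆ = 0 := by
    rw [← lie_skew, lie_h_eq_zero_of_lie_e_of_lie_f t₂ hx.1 hx.2, neg_zero]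
  have hlie_h₁ {y : L} (he : ⁅e₁, y⁆ = 0) (hf : ⁅f₁, y⁆ = 0) : ⁅h₁, y⁆ = 0 := by
    rw [← lie_skew, neg_eq_zero] at he hf ⊢
    exact lie_h_eq_zero_of_lie_e_of_lie_f t₁ he hf
  let U (k : ℕ) := (toEnd K L M h₁).eigenspace (k : K)
  let V (k : ℕ) := (toEnd K L M h₂).eigenspace (k : K)
  have hfirst (k : ℕ) : finrank K ↥(U m ⊓ LinearMap.ker (toEnd K L M e₁) ⊓ V k)
      + finrank K ↥(U (m + 2) ⊓ V k) = finrank K ↥(U m ⊓ V k) := by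
    rw [inf_comm _ (V k), ← inf_assoc, inf_comm _ (V k), inf_comm _ (V k)]
    exact finrank_inf_eigenspace_inf_ker t₁
      (fun x hx => lie_mem_eigenspace_of_lie_eq_zero (hlie_h₂ he₁) hx)
      (fun x hx => lie_mem_eigenspace_of_lie_eq_zero (hlie_h₂ hf₁) hx) m
  have hsecond := finrank_inf_eigenspace_inf_ker t₂
    (W := (toEnd K L M h₁).eigenspace (m : K) ⊓ (toEnd K L M e₁).eigenspace 0)
    (fun x hx => ⟨lie_mem_eigenspace_of_lie_eq_zero (hlie_h₁ he₁.1 hf₁.1) hx.1,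
      lie_mem_eigenspace_of_lie_eq_zero he₁.1 hx.2⟩)
    (fun x hx => ⟨lie_mem_eigenspace_of_lie_eq_zero (hlie_h₁ he₁.2 hf₁.2) hx.1,
      lie_mem_eigenspace_of_lie_eq_zero he₁.2 hx.2⟩) n
  rw [End.eigenspace_zero] at hsecond
  linarith only [hfirst n, hfirst (n + 2), hsecond]

end CommutingTriples

section SimpleRootSubsets

open Module LieModule

variable {ι L : Type*} [Fintype ι] [DecidableEq ι] [LieRing L] {A : Matrix ι ι ℤ} {E F H : ι → L}
  {ε : ι → ℤˣ} {α c : ι → ℤ} {i : ι} {s : Finset ι} {m : ℤ}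

omit [DecidableEq ι] in
lemma lie_cartan_sum_E (hA : IsFiniteType A) (hS : IsChevalleySystem A E F H)
    (hc : ∀ i ∈ s, (A *ᵥ c) i = m) : ⁅cartan H c, ∑ i ∈ s, E i⁆ = m • ∑ i ∈ s, E i := by
  rw [lie_sum, Finset.smul_sum]
  refine Finset.sum_congr rfl fun i hi => ?_
  have hneg := lie_F_cartan hA hS.swap c i
  rw [cartan] at hneg ⊢
  simp only [Pi.neg_apply, smul_neg, Finset.sum_neg_distrib, lie_neg] at hneg
  rw [← lie_skew, hneg, hc i hi]

omit [DecidableEq ι] in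
lemma lie_cartan_sum_F (hA : IsFiniteType A) (hS : IsChevalleySystem A E F H) {d : ι → ℤ}
    (hc : ∀ i ∈ s, (A *ᵥ c) i = m) :
    ⁅cartan H c, ∑ i ∈ s, d i • F i⁆ = -(m • ∑ i ∈ s, d i • F i) := by
  rw [lie_sum, Finset.smul_sum, ← Finset.sum_neg_distrib]
  refine Finset.sum_congr rfl fun i hi => ?_
  rw [lie_smul, ← lie_skew, lie_F_cartan hA hS, hc i hi, smul_neg, smul_comm]

omit [DecidableEq ι] in
theorem isSl2Triple_cartan (hA : IsFiniteType A) (hS : IsChevalleySystem A E F H)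
    (hcs : ∀ i, i ∉ s → c i = 0) (hc : ∀ i ∈ s, (A *ᵥ c) i = 2) (hne : cartan H c ≠ 0) :
    IsSl2Triple (cartan H c) (∑ i ∈ s, E i) (∑ i ∈ s, c i • F i) where
  h_ne_zero := hne
  lie_e_f := by
    have hEF (i : ι) (hi : i ∈ s) : ⁅E i, ∑ j ∈ s, c j • F j⁆ = c i • H i := by
      rw [lie_sum, Finset.sum_eq_single_of_mem i hi fun j _ hj => by
        rw [lie_smul, hS.lie_E_F_ne i j hj.symm, smul_zero], lie_smul, hS.lie_E_F_same]
    rw [sum_lie, Finset.sum_congr rfl hEF, cartan]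
    exact Finset.sum_subset (Finset.subset_univ s) fun i _ hi => by rw [hcs i hi, zero_smul]
  lie_h_e_nsmul := by rw [lie_cartan_sum_E hA hS hc, ofNat_smul_eq_nsmul]
  lie_h_f_nsmul := by rw [lie_cartan_sum_F hA hS hc, ofNat_smul_eq_nsmul]

omit [Fintype ι] [DecidableEq ι] in
lemma lie_sum_E_F (hS : IsChevalleySystem A E F H) (hi : i ∉ s) : ⁅∑ j ∈ s, E j, F i⁆ = 0 := by
  rw [sum_lie]
  exact Finset.sum_eq_zero fun j hj => hS.lie_E_F_ne j i (ne_of_mem_of_not_mem hj hi)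

lemma lie_cartan_rootElement [IsAddTorsionFree L] (hA : IsFiniteType A)
    (hS : IsSerreSystem A E F H) (hε : IsAlternating A ε) (c α : ι → ℤ) :
    ⁅cartan H c, rootElement A E F ε α⁆ = (A *ᵥ c ⬝ᵥ α) • rootElement A E F ε α := by
  rw [cartan, sum_lie, dotProduct_comm, hA.dotProduct_mulVec_comm, dotProduct, Finset.sum_smul]
  simp only [smul_lie, lie_H_rootElement hA hS hε, smul_smul]

lemma lie_E_rootElement_eq_zero [IsAddTorsionFree L] (hA : IsFiniteType A)
    (hS : IsSerreSystem A E F H) (hε : IsAlternating A ε) (hα : IsRoot A α)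
    (hi : 0 ≤ (A *ᵥ α) i) : ⁅E i, rootElement A E F ε α⁆ = 0 := by
  have hne : α ≠ -simpleRoot i := by
    rintro rfl
    rw [mulVec_neg, Pi.neg_apply, mulVec_simpleRoot, hA.diag] at hi
    lia
  rw [lie_E_rootElement hA hS hε hα hne, rootElement_of_not_isRoot hA]
  rw [hA.isRoot_add_simpleRoot_iff hα]
  lia

lemma lie_F_rootElement_eq_zero [IsAddTorsionFree L] (hA : IsFiniteType A)
    (hS : IsSerreSystem A E F H) (hε : IsAlternating A ε) (hα : IsRoot A α)
    (hi : (A *ᵥ α) i ≤ 0) : ⁅F i, rootElement A E F ε α⁆ = 0 := by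
  rw [← rootElement_swap]
  refine lie_E_rootElement_eq_zero hA hS.swap hε.neg hα.neg ?_
  rwa [mulVec_neg, Pi.neg_apply, neg_nonneg]

lemma lie_sum_E_rootElement_eq_zero [IsAddTorsionFree L] (hA : IsFiniteType A)
    (hS : IsSerreSystem A E F H) (hε : IsAlternating A ε) (hα : IsRoot A α)
    (hs : ∀ i ∈ s, 0 ≤ (A *ᵥ α) i) : ⁅∑ i ∈ s, E i, rootElement A E F ε α⁆ = 0 := by
  rw [sum_lie]
  exact Finset.sum_eq_zero fun i hi => lie_E_rootElement_eq_zero hA hS hε hα (hs i hi)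

lemma lie_F_rootElement_of_eq_one [IsAddTorsionFree L] (hA : IsFiniteType A)
    (hS : IsSerreSystem A E F H) (hε : IsAlternating A ε) (hα : IsRoot A α)
    (hi : (A *ᵥ α) i = 1) :
    ⁅F i, rootElement A E F ε α⁆ = rootElement A E F ε (α - simpleRoot i) :=
  lie_F_rootElement hA hS hε hα fun h => by
    rw [h, mulVec_simpleRoot, hA.diag] at hi
    lia

end SimpleRootSubsets

section Nilpotent

open Module LieModule CartanMatrix PaperStmt

variable {K L : Type*} [Field K] [CharZero K] [LieRing L] [LieAlgebra K L] [IsAddTorsionFree L]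
  {E F H : Fin 8 → L}

/-- The simple roots of the Levi subsystem `A₃ + A₁`, the component `A₃` being `0, 2, 3`. -/
def leviSimpleRoots : Finset (Fin 8) := {5, 0, 2, 3}

/-- The regular nilpotent element of the Levi subalgebra of type `A₃ + A₁`. -/
def leviNilpotent (E : Fin 8 → L) : L := ∑ i ∈ leviSimpleRoots, E i

theorem isSl2Triple_leviNilpotent (hS : IsSerreGenerators K E₈ E F H) :
    IsSl2Triple (cartan H neutralCoeff) (leviNilpotent E)
      (∑ i ∈ leviSimpleRoots, neutralCoeff i • F i) :=
  isSl2Triple_cartan isFiniteType_E₈ hS.toIsChevalleySystem (by decide) (by decide)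
    (cartan_ne_zero isFiniteType_E₈ hS isAlternating_signE₈ (by decide))

theorem isSl2Triple_A₃ (hS : IsSerreGenerators K E₈ E F H) :
    IsSl2Triple (cartan H neutralCoeffA₃) (∑ i ∈ {0, 2, 3}, E i)
      (∑ i ∈ {0, 2, 3}, neutralCoeffA₃ i • F i) :=
  isSl2Triple_cartan isFiniteType_E₈ hS.toIsChevalleySystem (by decide) (by decide)
    (cartan_ne_zero isFiniteType_E₈ hS isAlternating_signE₈ (by decide))

theorem isSl2Triple_A₁ (hS : IsSerreGenerators K E₈ E F H) :
    IsSl2Triple (cartan H (simpleRoot 5)) (E 5) (F 5) := by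
  convert isSl2Triple_cartan (s := {5}) (c := simpleRoot 5) isFiniteType_E₈
    hS.toIsChevalleySystem (by decide) (by decide)
    (cartan_ne_zero isFiniteType_E₈ hS isAlternating_signE₈ (by decide))
  · rw [Finset.sum_singleton]
  · rw [Finset.sum_singleton, simpleRoot, Pi.single_eq_same, one_smul]

omit [IsAddTorsionFree L] in
lemma leviNilpotent_eq (E : Fin 8 → L) : leviNilpotent E = E 5 + ∑ i ∈ {0, 2, 3}, E i :=
  Finset.sum_insert (by decide)

omit [IsAddTorsionFree L] in
lemma cartan_neutralCoeff (H : Fin 8 → L) :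
    cartan H neutralCoeff = cartan H (simpleRoot 5) + cartan H neutralCoeffA₃ := by
  rw [← cartan_add]
  exact congr_arg _ (by decide)

lemma finrank_eigenspace_neutralCoeff (hS : IsSerreGenerators K E₈ E F H) (n : Fin 4) :
    finrank K ↥((toEnd K L L (cartan H neutralCoeff)).eigenspace ((n : ℕ) : K))
      = ![50, 34, 26, 20] n := by
  rw [← inf_idem ((toEnd K L L (cartan H neutralCoeff)).eigenspace _), ← Int.cast_natCast (n : ℕ),
    finrank_eigenspace_cartan_inf isFiniteType_E₈ hS isAlternating_signE₈ mem_posRootsE₈,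
    mulVec_neutralCoeff, ← weightCount_neutral]
  simp only [and_self]

lemma finrank_eigenspace_neutralCoeffA₃_inf (hS : IsSerreGenerators K E₈ E F H) (m : Fin 2)
    (n : Fin 4) :
    finrank K ↥((toEnd K L L (cartan H neutralCoeffA₃)).eigenspace ((2 * m : ℕ) : K) ⊓
        (toEnd K L L (cartan H (simpleRoot 5))).eigenspace ((n : ℕ) : K))
      = ![![34, 16, 1, 0], ![9, 2, 0, 0]] m n := by
  rw [← Int.cast_natCast (2 * m : ℕ), ← Int.cast_natCast (n : ℕ),
    finrank_eigenspace_cartan_inf isFiniteType_E₈ hS isAlternating_signE₈ mem_posRootsE₈,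
    mulVec_neutralCoeffA₃, show E₈ *ᵥ simpleRoot 5 = ![0, 0, 0, 0, -1, 2, -1, 0] by decide,
    ← weightCount_neutralA₃_neutralA₁, Nat.cast_mul, Nat.cast_ofNat]

theorem finrank_centralizerOf_leviNilpotent [FiniteDimensional K L]
    (hS : IsSerreGenerators K E₈ E F H) :
    finrank K (centralizerOf K (leviNilpotent E)).toSubmodule = 84 := by
  rw [centralizerOf_eq_ker, finrank_ker_e (isSl2Triple_leviNilpotent hS)
    (iSup_eigenspace_cartan isFiniteType_E₈ hS isAlternating_signE₈ _)]
  exact congr_arg₂ _ (finrank_eigenspace_neutralCoeff hS 0) (finrank_eigenspace_neutralCoeff hS 1)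

lemma finrank_highestWeight_leviNilpotent [FiniteDimensional K L]
    (hS : IsSerreGenerators K E₈ E F H) (n : Fin 2) :
    finrank K ↥((toEnd K L L (cartan H neutralCoeff)).eigenspace ((n : ℕ) : K) ⊓
      LinearMap.ker (toEnd K L L (leviNilpotent E))) = ![24, 14] n := by
  have h := finrank_inf_eigenspace_inf_ker (K := K) (W := (⊤ : Submodule K L))
    (isSl2Triple_leviNilpotent hS) (fun _ _ => trivial) (fun _ _ => trivial) n
  rw [top_inf_eq, top_inf_eq] at h
  have hN := finrank_eigenspace_neutralCoeff hS
  rw [Nat.eq_sub_of_add_eq h]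
  fin_cases n
  exacts [congr_arg₂ _ (hN 0) (hN 2), congr_arg₂ _ (hN 1) (hN 3)]

omit [IsAddTorsionFree L] in
lemma lie_eq_zero_A₃_A₁ (hS : IsSerreSystem E₈ E F H) :
    ∀ x ∈ ({∑ i ∈ {0, 2, 3}, E i, ∑ i ∈ {0, 2, 3}, neutralCoeffA₃ i • F i} : Set L),
      ⁅x, E 5⁆ = 0 ∧ ⁅x, F 5⁆ = 0 := by
  rintro x (rfl | rfl)
  · refine ⟨?_, lie_sum_E_F hS.toIsChevalleySystem (by decide)⟩
    rw [sum_lie]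
    exact Finset.sum_eq_zero fun i hi => hS.lie_E_E i 5 (by revert i; decide)
  · simp only [sum_lie, smul_lie]
    refine ⟨Finset.sum_eq_zero fun i hi => ?_, Finset.sum_eq_zero fun i hi => ?_⟩
    · rw [← lie_skew, hS.lie_E_F_ne 5 i (by rintro rfl; revert hi; decide), neg_zero, smul_zero]
    · rw [hS.lie_F_F i 5 (by revert i; decide), smul_zero]

lemma finrank_highestWeight_A₃_A₁ [FiniteDimensional K L] (hS : IsSerreGenerators K E₈ E F H)
    (n : Fin 2) :
    finrank K ↥((toEnd K L L (cartan H neutralCoeffA₃)).eigenspace ((0 : ℕ) : K) ⊓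
      LinearMap.ker (toEnd K L L (∑ i ∈ {0, 2, 3}, E i)) ⊓
      (toEnd K L L (cartan H (simpleRoot 5))).eigenspace ((n : ℕ) : K) ⊓
      LinearMap.ker (toEnd K L L (E 5))) = ![24, 14] n := by
  have h := finrank_highestWeight_of_commuting (K := K) (M := L) (isSl2Triple_A₃ hS)
    (isSl2Triple_A₁ hS) (lie_eq_zero_A₃_A₁ hS.toIsSerreSystem) 0 n
  have hN := finrank_eigenspace_neutralCoeffA₃_inf hS
  rw [add_assoc] at h
  rw [Nat.eq_sub_of_add_eq h]
  fin_cases n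
  exacts [congr_arg₂ (· - ·) (congr_arg₂ (· + ·) (hN 0 0) (hN 1 2))
    (congr_arg₂ (· + ·) (hN 0 2) (hN 1 0)),
    congr_arg₂ (· - ·) (congr_arg₂ (· + ·) (hN 0 1) (hN 1 3))
      (congr_arg₂ (· + ·) (hN 0 3) (hN 1 1))]

lemma highestWeight_A₃_A₁_eq [FiniteDimensional K L] (hS : IsSerreGenerators K E₈ E F H)
    (n : Fin 2) :
    (toEnd K L L (cartan H neutralCoeffA₃)).eigenspace ((0 : ℕ) : K) ⊓
        LinearMap.ker (toEnd K L L (∑ i ∈ {0, 2, 3}, E i)) ⊓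
        (toEnd K L L (cartan H (simpleRoot 5))).eigenspace ((n : ℕ) : K) ⊓
        LinearMap.ker (toEnd K L L (E 5))
      = (toEnd K L L (cartan H neutralCoeff)).eigenspace ((n : ℕ) : K) ⊓
        LinearMap.ker (toEnd K L L (leviNilpotent E)) := by
  refine Submodule.eq_of_le_of_finrank_eq ?_ ((finrank_highestWeight_A₃_A₁ hS n).trans
    (finrank_highestWeight_leviNilpotent hS n).symm)
  rintro x ⟨⟨⟨hh₁, he₁⟩, hh₂⟩, he₂⟩
  rw [SetLike.mem_coe, End.mem_eigenspace_iff, toEnd_apply_apply] at hh₁ hh₂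
  rw [SetLike.mem_coe, LinearMap.mem_ker, toEnd_apply_apply] at he₁ he₂
  rw [Submodule.mem_inf, End.mem_eigenspace_iff, LinearMap.mem_ker, toEnd_apply_apply,
    toEnd_apply_apply, leviNilpotent_eq, cartan_neutralCoeff, add_lie, add_lie, hh₁, hh₂, he₁, he₂,
    Nat.cast_zero, zero_smul, add_zero, add_zero]
  exact ⟨rfl, rfl⟩

lemma lie_sum_F_A₃_eq_zero [FiniteDimensional K L] (hS : IsSerreGenerators K E₈ E F H) {x : L}
    {n : ℕ} (hn : n < 2) (he : ⁅leviNilpotent E, x⁆ = 0)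
    (hh : ⁅cartan H neutralCoeff, x⁆ = (n : K) • x) :
    ⁅∑ i ∈ {0, 2, 3}, neutralCoeffA₃ i • F i, x⁆ = 0 := by
  have hx : x ∈ (toEnd K L L (cartan H neutralCoeff)).eigenspace (n : K) ⊓
      LinearMap.ker (toEnd K L L (leviNilpotent E)) := ⟨End.mem_eigenspace_iff.2 hh, he⟩
  rw [← highestWeight_A₃_A₁_eq hS ⟨n, hn⟩] at hx
  have hh₁ := End.mem_eigenspace_iff.1 hx.1.1.1
  rw [Nat.cast_zero] at hh₁
  exact lie_f_eq_zero_of_lie_h_eq_zero (isSl2Triple_A₃ hS) hx.1.1.2 hh₁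

lemma killingForm_leviNilpotent_ne_zero (hS : IsSerreGenerators K E₈ E F H) :
    killingForm K L (leviNilpotent E) (∑ i ∈ {0, 2, 3}, neutralCoeffA₃ i • F i) ≠ 0 := by
  have t := isSl2Triple_leviNilpotent hS
  have t₁ := isSl2Triple_A₃ hS
  have t₂ := isSl2Triple_A₁ hS
  set f₁ := ∑ i ∈ {0, 2, 3}, neutralCoeffA₃ i • F i
  set h₁ := cartan H neutralCoeffA₃
  have hcomm := lie_eq_zero_A₃_A₁ hS.toIsSerreSystem
  have hF₅ : ⁅F 5, h₁⁆ = 0 := lie_h_eq_zero_of_lie_e_of_lie_f t₁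
    (by rw [← lie_skew, (hcomm _ (.inl rfl)).2, neg_zero])
    (by rw [← lie_skew, (hcomm _ (.inr rfl)).2, neg_zero])
  have horth : killingForm K L (cartan H (simpleRoot 5)) h₁ = 0 := by
    rw [← t₂.lie_e_f, killingForm, traceForm_apply_lie_apply, hF₅, map_zero]
  have hef : ⁅leviNilpotent E, f₁⁆ = h₁ := by
    rw [leviNilpotent_eq, add_lie, t₁.lie_e_f, ← lie_skew, (hcomm _ (.inr rfl)).1, neg_zero,
      zero_add]
  intro h0
  refine killingForm_cartan_self_ne_zero isFiniteType_E₈ hS isAlternating_signE₈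
    (c := neutralCoeffA₃) (by decide) ?_
  have hinv := traceForm_apply_lie_apply K L L (cartan H neutralCoeff) (leviNilpotent E) f₁
  rw [t.lie_h_e_smul K, hef, map_smul, LinearMap.smul_apply, ← killingForm, h0, smul_zero,
    cartan_neutralCoeff, map_add, LinearMap.add_apply, horth, zero_add] at hinv
  exact hinv.symm

theorem leviNilpotent_notMem_derivedOf [FiniteDimensional K L]
    (hS : IsSerreGenerators K E₈ E F H) :
    leviNilpotent E ∉ derivedOf K (centralizerOf K (leviNilpotent E)) := fun hmem => by
  refine killingForm_leviNilpotent_ne_zero hS (killingForm_eq_zero_of_mem_derivedOf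
    (isSl2Triple_leviNilpotent hS)
    (iSup_eigenspace_cartan isFiniteType_E₈ hS isAlternating_signE₈ _) ?_
    (fun x n hn he hh => lie_sum_F_A₃_eq_zero hS hn he hh) hmem)
  rw [lie_cartan_sum_F (m := 2) isFiniteType_E₈ hS.toIsChevalleySystem (by decide), neg_smul,
    ← Int.cast_smul_eq_zsmul K, Int.cast_ofNat]

end Nilpotent

section Generation

open Module LieModule CartanMatrix PaperStmt

variable {K L : Type*} [Field K] [CharZero K] [LieRing L] [LieAlgebra K L] [IsAddTorsionFree L]
  {E F H : Fin 8 → L}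

/-- The highest weight vectors of weight `n`, with respect to the `sl₂`-triple of `leviNilpotent E`,
in the Levi subalgebra, which is the centralizer of `cartan H leviCoeff`. -/
abbrev leviHighestWeight (K : Type*) {L : Type*} [Field K] [LieRing L] [LieAlgebra K L]
    (E H : Fin 8 → L) (n : ℕ) : Submodule K L :=
  (toEnd K L L (cartan H leviCoeff)).eigenspace 0 ⊓
    (toEnd K L L (cartan H neutralCoeff)).eigenspace (n : K) ⊓
    LinearMap.ker (toEnd K L L (leviNilpotent E))

omit [IsAddTorsionFree L] in
lemma lie_cartan_leviCoeff_leviNilpotent (hS : IsChevalleySystem E₈ E F H) :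
    ⁅cartan H leviCoeff, leviNilpotent E⁆ = 0 := by
  rw [leviNilpotent, lie_cartan_sum_E (m := 0) isFiniteType_E₈ hS (by decide), zero_smul]

lemma finrank_levi_inf_neutral (hS : IsSerreGenerators K E₈ E F H) (n : Fin 5) :
    finrank K ↥((toEnd K L L (cartan H leviCoeff)).eigenspace (0 : K) ⊓
        (toEnd K L L (cartan H neutralCoeff)).eigenspace ((2 * n : ℕ) : K))
      = ![8, 4, 2, 1, 0] n := by
  rw [← Int.cast_zero, ← Int.cast_natCast (2 * n : ℕ),
    finrank_eigenspace_cartan_inf isFiniteType_E₈ hS isAlternating_signE₈ mem_posRootsE₈,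
    mulVec_leviCoeff, mulVec_neutralCoeff, ← weightCount_levi_neutral, Nat.cast_mul, Nat.cast_ofNat]

lemma finrank_leviHighestWeight [FiniteDimensional K L] (hS : IsSerreGenerators K E₈ E F H)
    (n : Fin 4) : finrank K (leviHighestWeight K E H (2 * n)) = ![4, 2, 1, 1] n := by
  have hf : ⁅cartan H leviCoeff, ∑ i ∈ leviSimpleRoots, neutralCoeff i • F i⁆ = 0 := by
    rw [lie_cartan_sum_F (m := 0) isFiniteType_E₈ hS.toIsChevalleySystem (by decide), zero_smul,
      neg_zero]
  have h := finrank_inf_eigenspace_inf_ker (K := K) (M := L) (isSl2Triple_leviNilpotent hS)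
    (fun x => lie_mem_eigenspace_of_lie_eq_zero (μ := (0 : K))
      (lie_cartan_leviCoeff_leviNilpotent hS.toIsChevalleySystem))
    (fun x => lie_mem_eigenspace_of_lie_eq_zero hf) (2 * n)
  have hN := finrank_levi_inf_neutral hS
  rw [Nat.eq_sub_of_add_eq h]
  fin_cases n
  exacts [congr_arg₂ _ (hN 0) (hN 1), congr_arg₂ _ (hN 1) (hN 2), congr_arg₂ _ (hN 2) (hN 3),
    congr_arg₂ _ (hN 3) (hN 4)]

lemma leviHighestWeight_eq_bot [FiniteDimensional K L] (hS : IsSerreGenerators K E₈ E F H) {n : ℕ}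
    (hn : n ∉ ({0, 2, 4, 6} : Finset ℕ)) : leviHighestWeight K E H n = ⊥ := by
  suffices h : (toEnd K L L (cartan H leviCoeff)).eigenspace 0 ⊓
      (toEnd K L L (cartan H neutralCoeff)).eigenspace (n : K) = ⊥ by
    rw [leviHighestWeight, h, bot_inf_eq]
  rw [← Submodule.finrank_eq_zero (R := K), ← Int.cast_zero, ← Int.cast_natCast n,
    finrank_eigenspace_cartan_inf isFiniteType_E₈ hS isAlternating_signE₈ mem_posRootsE₈,
    mulVec_leviCoeff, mulVec_neutralCoeff]
  simp only [Finset.mem_insert, Finset.mem_singleton, not_or] at hn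
  refine weightCount_eq_zero (fun h => ?_) fun α hα => ⟨fun h => ?_, fun h => ?_⟩
  · rw [dotProduct_zero, dotProduct_zero] at h
    lia
  · have hmem := neutral_of_levi_eq_zero α hα h.1
    rw [h.2, Finset.mem_insert, Finset.mem_insert, Finset.mem_singleton] at hmem
    lia
  · rw [dotProduct_neg, dotProduct_neg, neg_eq_zero, neg_eq_iff_eq_neg] at h
    have hmem := neutral_of_levi_eq_zero α hα h.1
    rw [h.2, Finset.mem_insert, Finset.mem_insert, Finset.mem_singleton] at hmem
    lia

local notation "X" => rootElement E₈ E F signE₈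

omit [IsAddTorsionFree L] in
lemma lie_leviNilpotent_cartan (hS : IsChevalleySystem E₈ E F H) {c : Fin 8 → ℤ}
    (hc : ∀ i ∈ leviSimpleRoots, (E₈ *ᵥ c) i = 0) : ⁅leviNilpotent E, cartan H c⁆ = 0 := by
  rw [← lie_skew, leviNilpotent, lie_cartan_sum_E isFiniteType_E₈ hS hc, zero_smul, neg_zero]

omit [CharZero K] [IsAddTorsionFree L] in
lemma cartan_mem_leviHighestWeight (hS : IsChevalleySystem E₈ E F H) {c : Fin 8 → ℤ}
    (hc : ∀ i ∈ leviSimpleRoots, (E₈ *ᵥ c) i = 0) : cartan H c ∈ leviHighestWeight K E H 0 := by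
  refine ⟨⟨?_, ?_⟩, lie_leviNilpotent_cartan hS hc⟩ <;>
    rw [SetLike.mem_coe, End.mem_eigenspace_iff, toEnd_apply_apply, lie_cartan_cartan hS]
  · rw [zero_smul]
  · rw [Nat.cast_zero, zero_smul]

lemma lie_leviNilpotent_rootElement (hS : IsSerreSystem E₈ E F H) {α : Fin 8 → ℤ}
    (hα : IsRoot E₈ α) (hs : ∀ i ∈ leviSimpleRoots, 0 ≤ (E₈ *ᵥ α) i) :
    ⁅leviNilpotent E, X α⁆ = 0 :=
  lie_sum_E_rootElement_eq_zero isFiniteType_E₈ hS isAlternating_signE₈ hα hs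

omit [CharZero K] in
lemma cartan_mem_derivedOf (hS : IsSerreSystem E₈ E F H) {γ : Fin 8 → ℤ} (hγ : IsPosRoot E₈ γ)
    (hs : ∀ i ∈ leviSimpleRoots, (E₈ *ᵥ γ) i = 0) :
    cartan H γ ∈ derivedOf K (centralizerOf K (leviNilpotent E)) := by
  have hmem := lie_mem_derivedOf (K := K)
    (lie_leviNilpotent_rootElement hS hγ.1 fun i hi => (hs i hi).ge)
    (lie_leviNilpotent_rootElement hS hγ.1.neg fun i hi => by
      rw [mulVec_neg, Pi.neg_apply, hs i hi, neg_zero])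
  rw [lie_rootElement_neg isFiniteType_E₈ hS isAlternating_signE₈ hγ] at hmem
  have := zsmul_mem hmem ((height γ).negOnePow : ℤ)
  rwa [← Units.smul_def, smul_smul, Int.units_mul_self, one_smul] at this

/-- Four positive roots orthogonal to the roots of the Levi subsystem; their coroots form a basis of
the highest weight vectors of weight 0 in the Levi subalgebra. -/
def orthogonalRoots : Fin 4 → Fin 8 → ℤ :=
  ![![0, 0, 0, 0, 0, 0, 0, 1], ![1, 1, 2, 3, 3, 2, 1, 0], ![1, 2, 2, 3, 2, 1, 0, 0],
    ![2, 3, 4, 6, 5, 4, 3, 1]]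

omit [IsAddTorsionFree L] in
lemma linearIndependent_cartan_orthogonalRoots (hS : IsSerreGenerators K E₈ E F H) :
    LinearIndependent K fun k => cartan H (orthogonalRoots k) := by
  refine Fintype.linearIndependent_iff.2 fun g hg => ?_
  have hcoeff (i : Fin 8) : ∑ k, g k * orthogonalRoots k i = 0 := by
    refine Fintype.linearIndependent_iff.1
      (linearIndependent_of_lie_E isFiniteType_E₈ hS.toIsChevalleySystem hS.E_ne_zero)
      (fun i => ∑ k, g k * orthogonalRoots k i) ?_ i
    simp only [Finset.sum_smul, mul_smul, Int.cast_smul_eq_zsmul]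
    rw [Finset.sum_comm, ← hg]
    simp only [cartan, Finset.smul_sum]
  have h0 : g 1 + g 2 + 2 * g 3 = 0 := by
    simpa [orthogonalRoots, Fin.sum_univ_four, mul_comm] using hcoeff 0
  have h1 : g 1 + 2 * g 2 + 3 * g 3 = 0 := by
    simpa [orthogonalRoots, Fin.sum_univ_four, mul_comm] using hcoeff 1
  have h6 : g 1 + 3 * g 3 = 0 := by
    simpa [orthogonalRoots, Fin.sum_univ_four, mul_comm] using hcoeff 6
  have h7 : g 0 + g 3 = 0 := by
    simpa [orthogonalRoots, Fin.sum_univ_four, mul_comm] using hcoeff 7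
  have hg₃ : g 3 = 0 := by linear_combination (h6 + h1 - 2 * h0) / 2
  intro k
  fin_cases k <;> dsimp
  · linear_combination h7 - hg₃
  · linear_combination h6 - 3 * hg₃
  · linear_combination h1 - h0 - hg₃
  · exact hg₃

theorem leviHighestWeight_zero_le [FiniteDimensional K L] (hS : IsSerreGenerators K E₈ E F H) :
    leviHighestWeight K E H 0 ≤ derivedOf K (centralizerOf K (leviNilpotent E)) :=
  le_of_linearIndependent (linearIndependent_cartan_orthogonalRoots hS)
    (fun k => cartan_mem_leviHighestWeight hS.toIsChevalleySystem (by revert k; decide))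
    (fun k => cartan_mem_derivedOf hS.toIsSerreSystem (by revert k; decide) (by revert k; decide))
    (finrank_leviHighestWeight hS 0).le

omit [CharZero K] in
lemma rootElement_mem_eigenspace (hS : IsSerreSystem E₈ E F H) {α : Fin 8 → ℤ} {n : ℕ}
    (ht : E₈ *ᵥ leviCoeff ⬝ᵥ α = 0) (hh : E₈ *ᵥ neutralCoeff ⬝ᵥ α = n) :
    X α ∈ (toEnd K L L (cartan H leviCoeff)).eigenspace 0 ⊓
      (toEnd K L L (cartan H neutralCoeff)).eigenspace (n : K) := by
  refine ⟨?_, ?_⟩ <;> rw [SetLike.mem_coe, End.mem_eigenspace_iff, toEnd_apply_apply,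
    lie_cartan_rootElement isFiniteType_E₈ hS isAlternating_signE₈]
  · rw [ht, zero_smul, zero_smul]
  · rw [hh, natCast_zsmul, Nat.cast_smul_eq_nsmul]

omit [CharZero K] in
lemma rootElement_mem_derivedOf (hS : IsSerreSystem E₈ E F H) {α : Fin 8 → ℤ} (i : Fin 8)
    (hi : i ∉ leviSimpleRoots) (hα : IsRoot E₈ (α + simpleRoot i))
    (hαi : (E₈ *ᵥ (α + simpleRoot i)) i = 1)
    (hs : ∀ j ∈ leviSimpleRoots, 0 ≤ (E₈ *ᵥ (α + simpleRoot i)) j) :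
    X α ∈ derivedOf K (centralizerOf K (leviNilpotent E)) := by
  have h := lie_F_rootElement_of_eq_one isFiniteType_E₈ hS isAlternating_signE₈ hα hαi
  rw [add_sub_cancel_right] at h
  rw [← h]
  exact lie_mem_derivedOf (lie_sum_E_F hS.toIsChevalleySystem hi)
    (lie_leviNilpotent_rootElement hS hα hs)

omit [CharZero K] in
lemma rootElement_signE₈_ne_zero (hS : IsSerreGenerators K E₈ E F H) {α : Fin 8 → ℤ}
    (hα : IsRoot E₈ α) : X α ≠ 0 :=
  rootElement_ne_zero isFiniteType_E₈ hS.toIsSerreSystem isAlternating_signE₈ hS.E_ne_zero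
    (hS.F_ne_zero E₈_diag hS.E_ne_zero) hα

lemma linearIndependent_leviNilpotent_simpleRoot (hS : IsSerreGenerators K E₈ E F H) :
    LinearIndependent K ![leviNilpotent E, X (simpleRoot 5)] := by
  refine LinearIndependent.pair_iff.2 fun a b hab => ?_
  have hF : ⁅leviNilpotent E, F 0⁆ = cartan H (simpleRoot 0) := by
    rw [leviNilpotent, sum_lie, Finset.sum_eq_single_of_mem 0 (by decide) fun i _ hi =>
      hS.lie_E_F_ne i 0 hi, hS.lie_E_F_same, cartan_simpleRoot]
  have hX : ⁅F 0, X (simpleRoot 5)⁆ = 0 :=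
    lie_F_rootElement_eq_zero isFiniteType_E₈ hS.toIsSerreSystem isAlternating_signE₈ (by decide)
      (by decide)
  have ha : a = 0 := by
    have h := congr_arg (⁅F 0, ·⁆) hab
    rw [lie_add, lie_smul, lie_smul, hX, smul_zero, add_zero, lie_zero, ← lie_skew, hF] at h
    exact (smul_eq_zero.1 h).resolve_right
      (neg_ne_zero.2 (cartan_ne_zero isFiniteType_E₈ hS isAlternating_signE₈ (by decide)))
  refine ⟨ha, ?_⟩
  rw [ha, zero_smul, zero_add] at hab
  exact (smul_eq_zero.1 hab).resolve_right (rootElement_signE₈_ne_zero hS (by decide))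

theorem leviHighestWeight_two_le [FiniteDimensional K L] (hS : IsSerreGenerators K E₈ E F H) :
    leviHighestWeight K E H 2 ≤
      Submodule.span K {leviNilpotent E} ⊔ derivedOf K (centralizerOf K (leviNilpotent E)) := by
  refine le_of_linearIndependent (linearIndependent_leviNilpotent_simpleRoot hS) ?_ ?_
    (finrank_leviHighestWeight hS 1).le
  · refine Fin.forall_fin_two.2 ⟨⟨⟨?_, ?_⟩, lie_self _⟩,
      rootElement_mem_eigenspace hS.toIsSerreSystem (by decide) (by decide),
      lie_leviNilpotent_rootElement hS.toIsSerreSystem (by decide) (by decide)⟩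
    · exact End.mem_eigenspace_iff.2
        ((lie_cartan_leviCoeff_leviNilpotent hS.toIsChevalleySystem).trans (zero_smul K _).symm)
    · exact End.mem_eigenspace_iff.2 ((isSl2Triple_leviNilpotent hS).lie_h_e_smul K)
  · refine Fin.forall_fin_two.2 ⟨Submodule.mem_sup_left (Submodule.mem_span_singleton_self _),
      Submodule.mem_sup_right ?_⟩
    exact rootElement_mem_derivedOf hS.toIsSerreSystem 6 (by decide) (by decide) (by decide)
      (by decide)

theorem leviHighestWeight_six_le [FiniteDimensional K L] (hS : IsSerreGenerators K E₈ E F H) :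
    leviHighestWeight K E H 6 ≤ derivedOf K (centralizerOf K (leviNilpotent E)) := by
  have hroot : IsRoot E₈ ![1, 0, 1, 1, 0, 0, 0, 0] := by decide
  refine le_of_linearIndependent (κ := Fin 1) (linearIndependent_unique_iff.2
    (rootElement_signE₈_ne_zero hS hroot)) (fun _ =>
    ⟨rootElement_mem_eigenspace hS.toIsSerreSystem (by decide) (by decide),
      lie_leviNilpotent_rootElement hS.toIsSerreSystem hroot (by decide)⟩)
    (fun _ => ?_) (finrank_leviHighestWeight hS 3).le
  exact rootElement_mem_derivedOf hS.toIsSerreSystem 1 (by decide) (by decide) (by decide)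
    (by decide)

omit [IsAddTorsionFree L] in
lemma lie_leviNilpotent_lie_F (hS : IsSerreSystem E₈ E F H) :
    ⁅leviNilpotent E, ⁅F 5 - F 3, F 4⁆⁆ = 0 := by
  have hF (i : Fin 8) (hi : i ∈ leviSimpleRoots) : ⁅leviNilpotent E, F i⁆ = H i := by
    rw [leviNilpotent, sum_lie, Finset.sum_eq_single_of_mem i hi fun j _ hj =>
      hS.lie_E_F_ne j i hj, hS.lie_E_F_same]
  have hF₄ : ⁅leviNilpotent E, F 4⁆ = 0 := lie_sum_E_F hS.toIsChevalleySystem (by decide)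
  rw [leibniz_lie, lie_sub, hF 5 (by decide), hF 3 (by decide), hF₄, lie_zero, add_zero, sub_lie,
    hS.lie_H_F, hS.lie_H_F, show E₈ 5 4 = -1 by decide, show E₈ 3 4 = -1 by decide, sub_self]

lemma lie_leviNilpotent_rootElement_sub (hS : IsSerreSystem E₈ E F H) :
    ⁅leviNilpotent E, X ![1, 0, 1, 1, 1, 0, 0, 0] - X ![0, 0, 1, 1, 1, 1, 0, 0]⁆ = 0 := by
  have hα : IsRoot E₈ ![1, 0, 1, 1, 1, 0, 0, 0] := by decide
  have hβ : IsRoot E₈ ![0, 0, 1, 1, 1, 1, 0, 0] := by decide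
  have hE₅ : ⁅E 5, X ![1, 0, 1, 1, 1, 0, 0, 0]⁆ = X ![1, 0, 1, 1, 1, 1, 0, 0] := by
    rw [lie_E_rootElement isFiniteType_E₈ hS isAlternating_signE₈ hα (by decide)]
    exact congr_arg _ (by decide)
  have hE₀ : ⁅E 0, X ![0, 0, 1, 1, 1, 1, 0, 0]⁆ = X ![1, 0, 1, 1, 1, 1, 0, 0] := by
    rw [lie_E_rootElement isFiniteType_E₈ hS isAlternating_signE₈ hβ (by decide)]
    exact congr_arg _ (by decide)
  have hα₅ : ⁅leviNilpotent E, X ![1, 0, 1, 1, 1, 0, 0, 0]⁆ = X ![1, 0, 1, 1, 1, 1, 0, 0] := by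
    rw [leviNilpotent, sum_lie, Finset.sum_eq_single_of_mem 5 (by decide) fun i _ hi =>
      lie_E_rootElement_eq_zero isFiniteType_E₈ hS isAlternating_signE₈ hα (by decide +revert), hE₅]
  have hβ₀ : ⁅leviNilpotent E, X ![0, 0, 1, 1, 1, 1, 0, 0]⁆ = X ![1, 0, 1, 1, 1, 1, 0, 0] := by
    rw [leviNilpotent, sum_lie, Finset.sum_eq_single_of_mem 0 (by decide) fun i _ hi =>
      lie_E_rootElement_eq_zero isFiniteType_E₈ hS isAlternating_signE₈ hβ (by decide +revert), hE₀]
  rw [lie_sub, hα₅, hβ₀, sub_self]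

lemma lie_lie_F_rootElement_sub (hS : IsSerreSystem E₈ E F H) :
    ⁅⁅F 5 - F 3, F 4⁆, X ![1, 0, 1, 1, 1, 0, 0, 0] - X ![0, 0, 1, 1, 1, 1, 0, 0]⁆
      = X ![0, 0, 1, 1, 0, 0, 0, 0] - X ![1, 0, 1, 0, 0, 0, 0, 0] := by
  have hone {α : Fin 8 → ℤ} (i : Fin 8) (β : Fin 8 → ℤ) (hα : IsRoot E₈ α)
      (hi : (E₈ *ᵥ α) i = 1) (hβ : α - simpleRoot i = β) : ⁅F i, X α⁆ = X β :=
    hβ ▸ lie_F_rootElement_of_eq_one isFiniteType_E₈ hS isAlternating_signE₈ hα hi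
  have hzero {α : Fin 8 → ℤ} {i : Fin 8} (hα : IsRoot E₈ α) (hi : (E₈ *ᵥ α) i ≤ 0) :
      ⁅F i, X α⁆ = 0 :=
    lie_F_rootElement_eq_zero isFiniteType_E₈ hS isAlternating_signE₈ hα hi
  have hF₄ : ⁅F 4, X ![1, 0, 1, 1, 1, 0, 0, 0] - X ![0, 0, 1, 1, 1, 1, 0, 0]⁆
      = X ![1, 0, 1, 1, 0, 0, 0, 0] := by
    rw [lie_sub, hone 4 ![1, 0, 1, 1, 0, 0, 0, 0] (by decide) (by decide) (by decide),
      hzero (by decide) (by decide), sub_zero]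
  have hF₅₃ : ⁅F 5 - F 3, X ![1, 0, 1, 1, 1, 0, 0, 0] - X ![0, 0, 1, 1, 1, 1, 0, 0]⁆
      = -X ![0, 0, 1, 1, 1, 0, 0, 0] := by
    rw [lie_sub, sub_lie, sub_lie, hzero (by decide) (by decide), hzero (by decide) (by decide),
      hone 5 ![0, 0, 1, 1, 1, 0, 0, 0] (by decide) (by decide) (by decide),
      hzero (by decide) (by decide), sub_zero, zero_sub, sub_zero]
  rw [lie_lie, hF₄, hF₅₃, sub_lie, hzero (by decide) (by decide),
    hone 3 ![1, 0, 1, 0, 0, 0, 0, 0] (by decide) (by decide) (by decide), lie_neg,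
    hone 4 ![0, 0, 1, 1, 0, 0, 0, 0] (by decide) (by decide) (by decide)]
  abel

omit [CharZero K] in
lemma rootElement_sub_ne_zero (hS : IsSerreGenerators K E₈ E F H) :
    X ![0, 0, 1, 1, 0, 0, 0, 0] - X ![1, 0, 1, 0, 0, 0, 0, 0] ≠ 0 := by
  intro h
  have hF₀ : ⁅F 0, X ![0, 0, 1, 1, 0, 0, 0, 0]⁆ = 0 := lie_F_rootElement_eq_zero isFiniteType_E₈
    hS.toIsSerreSystem isAlternating_signE₈ (by decide) (by decide)
  rw [sub_eq_zero.1 h, lie_F_rootElement_of_eq_one isFiniteType_E₈ hS.toIsSerreSystem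
    isAlternating_signE₈ (by decide) (by decide)] at hF₀
  exact rootElement_signE₈_ne_zero hS (by decide) hF₀

theorem leviHighestWeight_four_le [FiniteDimensional K L] (hS : IsSerreGenerators K E₈ E F H) :
    leviHighestWeight K E H 4 ≤ derivedOf K (centralizerOf K (leviNilpotent E)) := by
  have hD : X ![0, 0, 1, 1, 0, 0, 0, 0] - X ![1, 0, 1, 0, 0, 0, 0, 0] ∈
      derivedOf K (centralizerOf K (leviNilpotent E)) := by
    rw [← lie_lie_F_rootElement_sub hS.toIsSerreSystem]
    exact lie_mem_derivedOf (lie_leviNilpotent_lie_F hS.toIsSerreSystem)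
      (lie_leviNilpotent_rootElement_sub hS.toIsSerreSystem)
  refine le_of_linearIndependent (κ := Fin 1) (linearIndependent_unique_iff.2
    (rootElement_sub_ne_zero hS)) (fun _ => ⟨sub_mem ?_ ?_, ?_⟩) (fun _ => hD)
    (finrank_leviHighestWeight hS 2).le
  · exact rootElement_mem_eigenspace hS.toIsSerreSystem (by decide) (by decide)
  · exact rootElement_mem_eigenspace hS.toIsSerreSystem (by decide) (by decide)
  · exact mem_centralizerOf.1 (derivedOf_le_centralizerOf hD)

theorem centralizerOf_leviNilpotent_le [FiniteDimensional K L]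
    (hS : IsSerreGenerators K E₈ E F H) :
    (centralizerOf K (leviNilpotent E)).toSubmodule ≤
      Submodule.span K {leviNilpotent E} ⊔ derivedOf K (centralizerOf K (leviNilpotent E)) := by
  have hdiag := iSup_eigenspace_cartan (K := K) isFiniteType_E₈ hS isAlternating_signE₈
  refine centralizerOf_le (isSl2Triple_leviNilpotent hS)
    (lie_leviNilpotent_cartan hS.toIsChevalleySystem (c := leviCoeff) (by decide))
    (lie_cartan_cartan hS.toIsChevalleySystem _ _) ?_ le_sup_right fun n => ?_
  · rintro _ (rfl | rfl) <;> exact hdiag _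
  by_cases hn : n ∈ ({0, 2, 4, 6} : Finset ℕ)
  · simp only [Finset.mem_insert, Finset.mem_singleton] at hn
    rcases hn with rfl | rfl | rfl | rfl
    · exact (leviHighestWeight_zero_le hS).trans le_sup_right
    · exact leviHighestWeight_two_le hS
    · exact (leviHighestWeight_four_le hS).trans le_sup_right
    · exact (leviHighestWeight_six_le hS).trans le_sup_right
  · exact (leviHighestWeight_eq_bot hS hn).le.trans bot_le

end Generation

end SimplyLaced

namespace PaperStmt

open LieAlgebra Module SimplyLaced CartanMatrix

theorem exists_sl2Triple_e₈_general (K : Type*) [Field K] [CharZero K] :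
    ∃ e h f : LieAlgebra.e₈ K, IsSl2Triple h e f ∧
      finrank K (centralizerOf K e).toSubmodule = 84 ∧
      finrank K (derivedOf K (centralizerOf K e)) = 83 ∧
      e ∉ derivedOf K (centralizerOf K e) ∧
      (centralizerOf K e).toSubmodule = Submodule.span K {e} ⊔ derivedOf K (centralizerOf K e) ∧
      Submodule.span K {e} ⊓ derivedOf K (centralizerOf K e) = ⊥ := by
  have : IsAddTorsionFree (LieAlgebra.e₈ K) := .of_isTorsionFree K _
  have hS := isSerreGenerators_gen (K := K) isFiniteType_E₈
  have := isFiniteType_E₈.finite_isRoot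
  have : FiniteDimensional K (LieAlgebra.e₈ K) :=
    .of_basis (chevalleyBasis isFiniteType_E₈ hS isAlternating_signE₈)
  have hdim := finrank_centralizerOf_leviNilpotent hS
  have hnotMem := leviNilpotent_notMem_derivedOf hS
  obtain ⟨hadd, hsup, hinf⟩ :=
    finrank_derivedOf_add_one (centralizerOf_leviNilpotent_le hS) hnotMem
  exact ⟨leviNilpotent (genE K E₈), cartan (genH K E₈) neutralCoeff, _,
    isSl2Triple_leviNilpotent hS, hdim, by lia, hnotMem, hsup, hinf⟩

/-- In the simple complex Lie algebra of type E₈ there is an `sl₂`-triple `(e,h,f)`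
such that `dim g_e = 84`, `dim [g_e, g_e] = 83`, `e ∉ [g_e, g_e]`, and hence `g_e` is
the direct sum of the span of `e` and `[g_e, g_e]`. -/
theorem exists_sl2Triple_e₈ :
    ∃ e h f : LieAlgebra.e₈ ℂ, IsSl2Triple h e f ∧
      Module.finrank ℂ (centralizerOf ℂ e).toSubmodule = 84 ∧
      Module.finrank ℂ (derivedOf ℂ (centralizerOf ℂ e)) = 83 ∧
      e ∉ derivedOf ℂ (centralizerOf ℂ e) ∧
      (centralizerOf ℂ e).toSubmodule
        = Submodule.span ℂ {e} ⊔ derivedOf ℂ (centralizerOf ℂ e) ∧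
      Submodule.span ℂ {e} ⊓ derivedOf ℂ (centralizerOf ℂ e) = ⊥ :=
  exists_sl2Triple_e₈_general ℂ

end PaperStmt
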